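/- Let Λ ∈ M_n(ℝ) be a nonzero diagonal matrix with tr Λ = 0, let U be a Haar-distributed random matrix in the unitary group U(n), and define A = U Λ U*. Let B be the upper-left k×k submatrix of A, and let G be a k×k GUE random matrix, i.e., a standard Gaussian random vector in the real inner product space of k×k complex Hermitian matrices equipped with the Hilbert–Schmidt inner product ⟨A,B⟩ = tr(AB). Then W₁( (√(n²−1)/‖Λ‖_HS) · B , G ) ≤ 18 k² √n · (‖Λ‖_op² / ‖Λ‖_HS²), where W₁ between random Hermitian k×k matrices is the L¹-Wasserstein distance with respect to the Hilbert–Schmidt norm: the supremum of |E f(M₁) − E f(M₂)| over functions f on k×k Hermitian matrices that are 1-Lipschitz for ‖·‖_HS. -/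

import Mathlib

open MeasureTheory ProbabilityTheory Matrix
open scoped Matrix

/-- Entrywise (Borel product) measurable structure on matrices. -/
instance matrixMeasurableSpace {m n α : Type*} [MeasurableSpace α] :
    MeasurableSpace (Matrix m n α) :=
  inferInstanceAs (MeasurableSpace (m → n → α))

/-- Hilbert–Schmidt norm of a real square matrix. -/
noncomputable def hsNormR {n : ℕ} (M : Matrix (Fin n) (Fin n) ℝ) : ℝ :=
  Real.sqrt ((M * Mᵀ).trace)

/-- Hilbert–Schmidt norm of a complex square matrix. -/
noncomputable def hsNormC {k : ℕ} (M : Matrix (Fin k) (Fin k) ℂ) : ℝ :=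
  Real.sqrt (((M * Mᴴ).trace).re)

/-- Operator (ℓ²→ℓ²) norm of a real square matrix. -/
noncomputable def opNormR {n : ℕ} (M : Matrix (Fin n) (Fin n) ℝ) : ℝ :=
  ‖Matrix.toEuclideanCLM (𝕜 := ℝ) M‖

/-- `γ` is the distribution of a `k × k` GUE matrix: a probability measure carried by the
Hermitian matrices such that every Hilbert–Schmidt-unit Hermitian linear functional
has a standard Gaussian distribution (i.e. a standard Gaussian on the real inner product
space of Hermitian matrices with `⟪A, B⟫ = tr (A B)`). -/
def IsGUE {k : ℕ} (γ : Measure (Matrix (Fin k) (Fin k) ℂ)) : Prop :=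
  IsProbabilityMeasure γ ∧ γ {M | M.IsHermitian} = 1 ∧
    ∀ B : Matrix (Fin k) (Fin k) ℂ, B.IsHermitian → ((B * B).trace).re = 1 →
      Measure.map (fun M => ((M * B).trace).re) γ = gaussianReal 0 1

/-!
Infinitesimal conjugation by unitaries preserves the law of `A`. Applied twice along an orthonormal
basis `X_a` of the Hermitian matrices, this invariance says that `δ_a = (2n)^(-1/2) i[X_a, A]`,
restricted to the block, is a Stein kernel: `E F(B) B = ∑ E F'(B) δ_a δ_a`. Interpolating from `B`
to an independent Gaussian `G` along `cos t • B + sin t • G` then bounds the Wasserstein distance by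
`E ‖G - ∑ ⟪δ_a, G⟫ δ_a‖`. With `‖A‖² = n² - 1` the kernel defect is explicit in `G`, `B` and the
block `D` of `A² - (n - 1/n)`, and the same identity for linear `F` bounds the second moments of
`B` and `D`. This gives the bound for `k ≤ √n`, and otherwise the crude bound `E ‖B‖ + E ‖G‖ ≤ 2k`
is good enough.
-/

section LipschitzIntegrals

variable {Ω E F : Type*} [MeasurableSpace Ω] {μ : Measure Ω}
  [NormedAddCommGroup E] [NormedSpace ℝ E] [NormedAddCommGroup F] [NormedSpace ℝ F]

lemma integrable_smul_comp_of_lipschitzWith {K : NNReal} {q : E → F} (hq : LipschitzWith K q)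
    {ξ : Ω → ℝ} (hξ : Integrable ξ μ) {Z : Ω → E} (hZ : AEStronglyMeasurable Z μ)
    (hξZ : Integrable (fun ω => ξ ω • Z ω) μ) :
    Integrable (fun ω => ξ ω • q (Z ω)) μ := by
  refine ((hξ.norm.mul_const ‖q 0‖).add (hξZ.norm.const_mul K)).mono'
    (hξ.1.smul (hq.continuous.comp_aestronglyMeasurable hZ)) (.of_forall fun ω => ?_)
  have hgrowth : ‖q (Z ω)‖ ≤ ‖q 0‖ + K * ‖Z ω‖ := by
    simpa [dist_eq_norm] using (norm_le_insert' (q (Z ω)) (q 0)).trans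
      (add_le_add_right (hq.norm_sub_le (Z ω) 0) _)
  calc ‖ξ ω • q (Z ω)‖ = ‖ξ ω‖ * ‖q (Z ω)‖ := norm_smul _ _
    _ ≤ ‖ξ ω‖ * (‖q 0‖ + K * ‖Z ω‖) := by gcongr
    _ = ‖ξ ω‖ * ‖q 0‖ + K * ‖ξ ω • Z ω‖ := by rw [norm_smul]; ring

lemma integrable_comp_of_lipschitzWith [IsFiniteMeasure μ] {K : NNReal} {q : E → F}
    (hq : LipschitzWith K q) {Z : Ω → E} (hZ : Integrable Z μ) :
    Integrable (fun ω => q (Z ω)) μ := by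
  simpa using integrable_smul_comp_of_lipschitzWith hq (integrable_const (1 : ℝ)) hZ.1
    (by simpa using hZ)

lemma abs_integral_comp_sub_integral_comp_le {Ω' : Type*} [MeasurableSpace Ω'] {ν : Measure Ω'}
    [IsProbabilityMeasure μ] [IsProbabilityMeasure ν] {K : NNReal} {f : E → ℝ}
    (hf : LipschitzWith K f) {X : Ω → E} (hX : Integrable X μ) {Y : Ω' → E}
    (hY : Integrable Y ν) :
    |∫ ω, f (X ω) ∂μ - ∫ ω, f (Y ω) ∂ν| ≤ K * (∫ ω, ‖X ω‖ ∂μ + ∫ ω, ‖Y ω‖ ∂ν) := by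
  have hXY : Integrable (fun p : Ω × Ω' => ‖X p.1‖ + ‖Y p.2‖) (μ.prod ν) :=
    (hX.norm.comp_fst ν).add (hY.norm.comp_snd μ)
  calc |∫ ω, f (X ω) ∂μ - ∫ ω, f (Y ω) ∂ν|
      = ‖∫ p, (f (X p.1) - f (Y p.2)) ∂(μ.prod ν)‖ := by
        rw [integral_sub ((integrable_comp_of_lipschitzWith hf hX).comp_fst ν)
          ((integrable_comp_of_lipschitzWith hf hY).comp_snd μ),
          integral_fun_fst (μ := μ) (ν := ν) (fun ω => f (X ω)),
          integral_fun_snd (μ := μ) (ν := ν) (fun ω => f (Y ω))]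
        simp
    _ ≤ ∫ p, K * (‖X p.1‖ + ‖Y p.2‖) ∂(μ.prod ν) := by
        refine norm_integral_le_of_norm_le (hXY.const_mul _) (.of_forall fun p => ?_)
        exact (hf.norm_sub_le _ _).trans (by gcongr; exact norm_sub_le _ _)
    _ = K * (∫ ω, ‖X ω‖ ∂μ + ∫ ω, ‖Y ω‖ ∂ν) := by
        rw [integral_const_mul, integral_add (hX.norm.comp_fst ν) (hY.norm.comp_snd μ),
          integral_fun_fst (fun ω => ‖X ω‖), integral_fun_snd (fun ω => ‖Y ω‖)]
        simp

end LipschitzIntegrals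

lemma integral_norm_le_sqrt {Ω E : Type*} [MeasurableSpace Ω] {μ : Measure Ω}
    [IsProbabilityMeasure μ] [NormedAddCommGroup E] {X : Ω → E} (hX : MemLp X 2 μ) :
    ∫ ω, ‖X ω‖ ∂μ ≤ √(∫ ω, ‖X ω‖ ^ 2 ∂μ) := by
  refine Real.le_sqrt_of_sq_le ?_
  have hvar := variance_nonneg (fun ω => ‖X ω‖) μ
  rw [variance_eq_sub hX.norm] at hvar
  simpa using hvar

section GaussianIntegrationByParts

variable {Ω E F : Type*} [MeasurableSpace Ω] {μ : Measure Ω}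
  [NormedAddCommGroup F] [NormedSpace ℝ F]

lemma hasDerivAt_integral_smul_comp_rotation [NormedAddCommGroup E] [NormedSpace ℝ E]
    {q : E → F} (hq : ContDiff ℝ 1 q) {K : NNReal}
    (hK : ∀ x, ‖fderiv ℝ q x‖ ≤ K) {ξ : Ω → ℝ} (hξ : Integrable ξ μ) {X Y : Ω → E}
    (hX : AEStronglyMeasurable X μ) (hY : AEStronglyMeasurable Y μ)
    (hξX : Integrable (fun ω => ξ ω • X ω) μ) (hξY : Integrable (fun ω => ξ ω • Y ω) μ) (t : ℝ) :
    HasDerivAt (fun t => ∫ ω, ξ ω • q (Real.cos t • X ω + Real.sin t • Y ω) ∂μ)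
      (∫ ω, ξ ω • fderiv ℝ q (Real.cos t • X ω + Real.sin t • Y ω)
        (-Real.sin t • X ω + Real.cos t • Y ω) ∂μ) t := by
  have hlip : LipschitzWith K q :=
    lipschitzWith_of_nnnorm_fderiv_le (hq.differentiable one_ne_zero) hK
  have hZ (a b : ℝ) : AEStronglyMeasurable (fun ω => a • X ω + b • Y ω) μ :=
    (hX.const_smul a).add (hY.const_smul b)
  have hint (t : ℝ) :
      Integrable (fun ω => ξ ω • q (Real.cos t • X ω + Real.sin t • Y ω)) μ := by
    refine integrable_smul_comp_of_lipschitzWith hlip hξ (hZ _ _) ?_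
    simpa only [smul_add, smul_comm (ξ _)] using
      (hξX.fun_smul (Real.cos t)).fun_add (hξY.fun_smul (Real.sin t))
  have hderiv_cont : Continuous fun p : E × E => fderiv ℝ q p.1 p.2 := by fun_prop
  have hspeed (t : ℝ) (ω : Ω) :
      ‖-Real.sin t • X ω + Real.cos t • Y ω‖ ≤ ‖X ω‖ + ‖Y ω‖ := by
    refine (norm_add_le _ _).trans ?_
    rw [norm_smul, norm_smul, norm_neg]
    gcongr
    · exact mul_le_of_le_one_left (norm_nonneg _) (Real.abs_sin_le_one t)
    · exact mul_le_of_le_one_left (norm_nonneg _) (Real.abs_cos_le_one t)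
  refine (hasDerivAt_integral_of_dominated_loc_of_deriv_le
    (F := fun t ω => ξ ω • q (Real.cos t • X ω + Real.sin t • Y ω))
    (F' := fun t ω => ξ ω • fderiv ℝ q (Real.cos t • X ω + Real.sin t • Y ω)
        (-Real.sin t • X ω + Real.cos t • Y ω))
    (bound := fun ω => K * (‖ξ ω • X ω‖ + ‖ξ ω • Y ω‖)) Filter.univ_mem
    (.of_forall fun t => (hint t).1) (hint t)
    (hξ.1.smul (hderiv_cont.comp_aestronglyMeasurable ((hZ _ _).prodMk (hZ _ _))))
    (.of_forall fun ω t _ => ?_) ((hξX.norm.add hξY.norm).const_mul K)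
    (.of_forall fun ω t _ => ?_)).2
  · rw [norm_smul, norm_smul, norm_smul, ← mul_add, mul_left_comm]
    gcongr
    exact (ContinuousLinearMap.le_of_opNorm_le _ (hK _) _).trans (by gcongr; exact hspeed t ω)
  · have hpath : HasDerivAt (fun t => Real.cos t • X ω + Real.sin t • Y ω)
        (-Real.sin t • X ω + Real.cos t • Y ω) t :=
      ((Real.hasDerivAt_cos t).smul_const _).add ((Real.hasDerivAt_sin t).smul_const _)
    exact ((hq.differentiable one_ne_zero _).hasFDerivAt.comp_hasDerivAt t hpath).const_smul (ξ ω)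

variable [NormedAddCommGroup E] [InnerProductSpace ℝ E] [FiniteDimensional ℝ E]
  [MeasurableSpace E] [BorelSpace E]

lemma memLp_two_id_stdGaussian : MemLp (fun x : E => x) 2 (stdGaussian E) :=
  IsGaussian.memLp_two_id

lemma integrable_id_stdGaussian : Integrable (fun x : E => x) (stdGaussian E) :=
  memLp_two_id_stdGaussian.integrable one_le_two

lemma integrable_inner_stdGaussian (v : E) :
    Integrable (fun x : E => inner ℝ v x) (stdGaussian E) :=
  integrable_id_stdGaussian.const_inner v

lemma integral_inner_stdGaussian (v : E) : ∫ x, inner ℝ v x ∂stdGaussian E = 0 := by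
  simpa using integral_strongDual_stdGaussian (innerSL ℝ v)

lemma integral_inner_mul_inner_stdGaussian (u v : E) :
    ∫ x, inner ℝ u x * inner ℝ v x ∂stdGaussian E = inner ℝ u v := by
  have hL2 := memLp_two_id_stdGaussian (E := E)
  have h := congr($(covarianceBilin_stdGaussian (E := E)) u v)
  rw [covarianceBilin_apply_eq_cov hL2, covariance_eq_sub (hL2.const_inner u) (hL2.const_inner v),
    integral_inner_stdGaussian, zero_mul, sub_zero] at h
  exact h

lemma integrable_inner_smul_stdGaussian (v : E) :
    Integrable (fun x : E => (inner ℝ v x : ℝ) • x) (stdGaussian E) :=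
  memLp_one_iff_integrable.1 <|
    memLp_two_id_stdGaussian.smul (memLp_two_id_stdGaussian.const_inner v)

lemma integral_inner_smul_stdGaussian (v : E) :
    ∫ x, (inner ℝ v x : ℝ) • x ∂stdGaussian E = v := by
  refine ext_inner_left ℝ fun u => ?_
  rw [← integral_inner (integrable_inner_smul_stdGaussian v), real_inner_comm,
    ← integral_inner_mul_inner_stdGaussian v u]
  simp only [inner_smul_right]

lemma integral_norm_sq_stdGaussian :
    ∫ x, ‖x‖ ^ 2 ∂stdGaussian E = Module.finrank ℝ E := by
  let b := stdOrthonormalBasis ℝ E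
  calc ∫ x, ‖x‖ ^ 2 ∂stdGaussian E
      = ∫ x, ∑ i, inner ℝ (b i) x * inner ℝ (b i) x ∂stdGaussian E := by
        refine integral_congr_ae (.of_forall fun x => ?_)
        simp only [← b.sum_sq_inner_right x, sq]
    _ = ∑ i, inner ℝ (b i) (b i) := by
        rw [integral_finsetSum _ fun i _ => ?_]
        · simp only [integral_inner_mul_inner_stdGaussian]
        · exact (memLp_two_id_stdGaussian.const_inner (b i)).integrable_mul
            (memLp_two_id_stdGaussian.const_inner (b i))
    _ = Module.finrank ℝ E := by simp

lemma integral_norm_stdGaussian_le :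
    ∫ x, ‖x‖ ∂stdGaussian E ≤ √(Module.finrank ℝ E) :=
  (integral_norm_le_sqrt memLp_two_id_stdGaussian).trans_eq (by rw [integral_norm_sq_stdGaussian])

lemma integrable_inner_smul_comp_stdGaussian {q : E → F} {K : NNReal} (hq : LipschitzWith K q)
    (v : E) : Integrable (fun x => (inner ℝ v x : ℝ) • q x) (stdGaussian E) :=
  integrable_smul_comp_of_lipschitzWith hq (integrable_inner_stdGaussian v)
    integrable_id_stdGaussian.1 (integrable_inner_smul_stdGaussian v)

lemma integral_inner_smul_comp_rotation_stdGaussian [CompleteSpace F] {q : E → F} {K : NNReal}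
    (hq : LipschitzWith K q) (v : E) (t : ℝ) :
    ∫ p, (inner ℝ v p.2 : ℝ) • q (Real.cos t • p.1 + Real.sin t • p.2)
        ∂((stdGaussian E).prod (stdGaussian E)) =
      Real.sin t • ∫ x, (inner ℝ v x : ℝ) • q x ∂stdGaussian E := by
  set γ := stdGaussian E with hγ
  let G : E × E → F := fun p => (inner ℝ v (Real.sin t • p.1 + Real.cos t • p.2) : ℝ) • q p.1
  have hG : Continuous G := by have := hq.continuous; fun_prop
  have hrot (p : E × E) : (inner ℝ v p.2 : ℝ) • q (Real.cos t • p.1 + Real.sin t • p.2) =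
      G (ContinuousLinearMap.rotation t p) := by
    have hsnd : Real.sin t • (Real.cos t • p.1 + Real.sin t • p.2) +
        Real.cos t • (-Real.sin t • p.1 + Real.cos t • p.2) = p.2 := by
      linear_combination (norm := module) (Real.sin_sq_add_cos_sq t) • p.2
    simp only [G, ContinuousLinearMap.rotation_apply, hsnd]
  have hq_int : Integrable q γ := integrable_comp_of_lipschitzWith hq integrable_id_stdGaussian
  have hinner_q : Integrable (fun x => (inner ℝ v x : ℝ) • q x) γ :=
    integrable_inner_smul_comp_stdGaussian hq v
  calc _ = ∫ p, G p ∂(γ.prod γ) := by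
        simp only [hrot]
        conv_rhs => rw [← IsGaussian.map_rotation_eq_self (μ := γ) (by simp [hγ]) t]
        rw [integral_map (by fun_prop) hG.aestronglyMeasurable]
    _ = ∫ p, (Real.sin t • (inner ℝ v p.1 : ℝ) • q p.1 +
          Real.cos t • (inner ℝ v p.2 : ℝ) • q p.1) ∂(γ.prod γ) := by
        simp only [G, inner_add_right, inner_smul_right, add_smul, mul_smul]
    _ = Real.sin t • ∫ x, (inner ℝ v x : ℝ) • q x ∂γ := by
        have hcross : Integrable (fun p : E × E => (inner ℝ v p.2 : ℝ) • q p.1) (γ.prod γ) :=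
          ((integrable_inner_stdGaussian v).smul_prod hq_int).swap
        have hzero : ∫ p : E × E, (inner ℝ v p.2 : ℝ) • q p.1 ∂(γ.prod γ) = 0 := by
          rw [integral_prod_symm _ hcross]
          simp_rw [integral_smul, integral_smul_const, hγ, integral_inner_stdGaussian, zero_smul]
        rw [integral_add ((hinner_q.comp_fst γ).fun_smul _) (hcross.fun_smul _), integral_smul,
          integral_smul, hzero, smul_zero, add_zero,
          integral_fun_fst (fun x => (inner ℝ v x : ℝ) • q x)]
        simp

lemma integral_fderiv_stdGaussian [CompleteSpace F] {q : E → F} (hq : ContDiff ℝ 1 q)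
    {K : NNReal} (hK : ∀ x, ‖fderiv ℝ q x‖ ≤ K) (v : E) :
    ∫ x, fderiv ℝ q x v ∂stdGaussian E = ∫ x, (inner ℝ v x : ℝ) • q x ∂stdGaussian E := by
  set γ := stdGaussian E
  have hlip : LipschitzWith K q :=
    lipschitzWith_of_nnnorm_fderiv_le (hq.differentiable one_ne_zero) hK
  have hinner : Integrable (fun x : E => (inner ℝ v x : ℝ)) γ := integrable_inner_stdGaussian v
  have hid : Integrable (fun x : E => x) γ := integrable_id_stdGaussian
  have hderiv := hasDerivAt_integral_smul_comp_rotation hq hK (μ := γ.prod γ)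
    (hinner.comp_snd γ) (hid.comp_fst γ).1 (hid.comp_snd γ).1
    ((hinner.smul_prod hid).swap) ((integrable_inner_smul_stdGaussian v).comp_snd γ) 0
  simp only [γ, integral_inner_smul_comp_rotation_stdGaussian hlip] at hderiv
  have hsin := ((Real.hasDerivAt_sin 0).smul_const
    (∫ x, (inner ℝ v x : ℝ) • q x ∂γ)).unique hderiv
  have hint : Integrable (fun p : E × E => fderiv ℝ q p.1 ((inner ℝ v p.2 : ℝ) • p.2))
      (γ.prod γ) := by
    refine (((integrable_inner_smul_stdGaussian v).comp_snd γ).norm.const_mul K).mono'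
      (Continuous.aestronglyMeasurable (by fun_prop)) (.of_forall fun p => ?_)
    exact ContinuousLinearMap.le_of_opNorm_le _ (hK _) _
  simp only [Real.cos_zero, Real.sin_zero, one_smul, zero_smul, add_zero, neg_zero, zero_add,
    ← map_smul] at hsin
  have hcov (x : E) : ∫ y, fderiv ℝ q x ((inner ℝ v y : ℝ) • y) ∂γ = fderiv ℝ q x v := by
    rw [ContinuousLinearMap.integral_comp_comm _ (integrable_inner_smul_stdGaussian v),
      integral_inner_smul_stdGaussian]
  rw [integral_prod _ hint] at hsin
  simpa only [hcov] using hsin.symm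

end GaussianIntegrationByParts

section AffineChange

variable {E F : Type*} [NormedAddCommGroup E] [NormedSpace ℝ E] [NormedAddCommGroup F]
  [NormedSpace ℝ F]

lemma fderiv_comp_smul_add (f : E → F) (c : ℝ) (a x : E) :
    fderiv ℝ (fun y => f (c • y + a)) x = c • fderiv ℝ f (c • x + a) := by
  rw [fderiv_comp_smul (f := fun y => f (y + a)), fderiv_comp_add_right]

lemma norm_fderiv_comp_smul_add_le {f : E → F} {K : ℝ} (hK : ∀ x, ‖fderiv ℝ f x‖ ≤ K) {c : ℝ}
    (hc : |c| ≤ 1) (a x : E) : ‖fderiv ℝ (fun y => f (c • y + a)) x‖ ≤ K := by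
  rw [fderiv_comp_smul_add, norm_smul]
  exact (mul_le_of_le_one_left (norm_nonneg _) hc).trans (hK _)

end AffineChange

section SteinKernel

variable {Ω κ E : Type*} [MeasurableSpace Ω] [Fintype κ] {P : Measure Ω}
  [NormedAddCommGroup E] [InnerProductSpace ℝ E] {W : Ω → E} {δ : κ → Ω → E}

/-- The random vector `W` has the (not necessarily `W`-measurable) Stein kernel
`∑ a, δ a ⊗ δ a`: `E⟨W, F(W)⟩ = ∑ a, E⟨δ a, DF(W) (δ a)⟩` for bounded `C¹` fields `F` with
bounded derivative. Fields take values in the dual of `E`, so that gradients `fderiv ℝ f` can be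
used directly. A standard Gaussian vector is characterized by the kernel being the identity. -/
structure HasSteinKernel (W : Ω → E) (δ : κ → Ω → E) (P : Measure Ω) : Prop where
  integrable : Integrable W P
  memLp_two : ∀ a, MemLp (δ a) 2 P
  integral_eq : ∀ F : E → E →L[ℝ] ℝ, ContDiff ℝ 1 F → ∀ C : NNReal, (∀ x, ‖F x‖ ≤ C) →
    (∀ x, ‖fderiv ℝ F x‖ ≤ C) →
      ∫ ω, F (W ω) (W ω) ∂P = ∑ a, ∫ ω, fderiv ℝ F (W ω) (δ a ω) (δ a ω) ∂P

/-- The rotation path `cos t • W + sin t • g` from `W` (at `t = 0`) to an independent vector `g`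
(at `t = π / 2`). -/
noncomputable def rotationPath (W : Ω → E) (t : ℝ) (p : Ω × E) : E :=
  Real.cos t • W p.1 + Real.sin t • p.2

/-- The part of `g` not accounted for by the kernel `∑ a, δ a ⊗ δ a`; it vanishes identically when
the kernel is the identity. -/
noncomputable def kernelDefect (δ : κ → Ω → E) (p : Ω × E) : E :=
  p.2 - ∑ a, (inner ℝ (δ a p.1) p.2 : ℝ) • δ a p.1

namespace HasSteinKernel

variable [FiniteDimensional ℝ E] [MeasurableSpace E] [BorelSpace E]
  {f : E → ℝ} {C K : NNReal}

section Integrability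

variable (hW : HasSteinKernel W δ P)
include hW

lemma aestronglyMeasurable_rotationPath (t : ℝ) :
    AEStronglyMeasurable (rotationPath W t) (P.prod (stdGaussian E)) :=
  ((hW.integrable.comp_fst _).1.const_smul _).add (measurable_snd.aestronglyMeasurable.const_smul _)

lemma integrable_clm_rotationPath {F : Type*} [NormedAddCommGroup F] [NormedSpace ℝ F]
    {φ : E → E →L[ℝ] F} (hφ : Continuous φ) (hC : ∀ x, ‖φ x‖ ≤ C) (t : ℝ) {u : Ω × E → E}
    (hu : Integrable u (P.prod (stdGaussian E))) :
    Integrable (fun p => φ (rotationPath W t p) (u p)) (P.prod (stdGaussian E)) := by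
  have happ : Continuous fun q : E × E => φ q.1 q.2 := by fun_prop
  refine (hu.norm.const_mul C).mono' (happ.comp_aestronglyMeasurable
    ((hW.aestronglyMeasurable_rotationPath t).prodMk hu.1)) (.of_forall fun p => ?_)
  exact ContinuousLinearMap.le_of_opNorm_le _ (hC _) _

lemma integrable_inner_smul (a : κ) :
    Integrable (fun p : Ω × E => (inner ℝ (δ a p.1) p.2 : ℝ) • δ a p.1)
      (P.prod (stdGaussian E)) := by
  have hδ := hW.memLp_two a
  have hδ' : AEStronglyMeasurable (fun p : Ω × E => δ a p.1) (P.prod (stdGaussian E)) :=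
    hδ.1.comp_fst
  refine (hδ.norm.integrable_sq.mul_prod integrable_id_stdGaussian.norm).mono'
    ((hδ'.inner measurable_snd.aestronglyMeasurable).smul hδ') (.of_forall fun p => ?_)
  calc ‖(inner ℝ (δ a p.1) p.2 : ℝ) • δ a p.1‖
      ≤ (‖δ a p.1‖ * ‖p.2‖) * ‖δ a p.1‖ := by
        rw [norm_smul]
        gcongr
        exact norm_inner_le_norm _ _
    _ = ‖δ a p.1‖ ^ 2 * ‖p.2‖ := by ring

lemma integrable_bilin_rotationPath {ψ : E → E →L[ℝ] E →L[ℝ] ℝ} (hψ : Continuous ψ)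
    (hK : ∀ x, ‖ψ x‖ ≤ K) (t : ℝ) (a : κ) :
    Integrable (fun p => ψ (rotationPath W t p) (δ a p.1) (δ a p.1))
      (P.prod (stdGaussian E)) := by
  have hδ := hW.memLp_two a
  have hδ' : AEStronglyMeasurable (fun p : Ω × E => δ a p.1) (P.prod (stdGaussian E)) :=
    hδ.1.comp_fst
  have happ : Continuous fun q : E × E => ψ q.1 q.2 q.2 := by fun_prop
  refine ((hδ.norm.integrable_sq.comp_fst (stdGaussian E)).const_mul K).mono'
    (happ.comp_aestronglyMeasurable
      ((hW.aestronglyMeasurable_rotationPath t).prodMk hδ')) (.of_forall fun p => ?_)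
  calc ‖ψ (rotationPath W t p) (δ a p.1) (δ a p.1)‖
      ≤ ‖ψ (rotationPath W t p)‖ * ‖δ a p.1‖ * ‖δ a p.1‖ := ContinuousLinearMap.le_opNorm₂ _ _ _
    _ ≤ K * ‖δ a p.1‖ * ‖δ a p.1‖ := by gcongr; exact hK _
    _ = K * ‖δ a p.1‖ ^ 2 := by ring

variable [IsProbabilityMeasure P]

lemma integrable_kernelDefect :
    Integrable (kernelDefect δ) (P.prod (stdGaussian E)) :=
  (integrable_id_stdGaussian.comp_snd P).sub
    (integrable_finsetSum _ fun a _ => hW.integrable_inner_smul a)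

lemma integral_rotationPath_self {φ : E → E →L[ℝ] ℝ} (hφ : ContDiff ℝ 1 φ)
    (hC : ∀ x, ‖φ x‖ ≤ C) (hK : ∀ x, ‖fderiv ℝ φ x‖ ≤ K) (t : ℝ) :
    ∫ p, φ (rotationPath W t p) (W p.1) ∂(P.prod (stdGaussian E)) =
      Real.cos t * ∑ a, ∫ p, fderiv ℝ φ (rotationPath W t p) (δ a p.1) (δ a p.1)
        ∂(P.prod (stdGaussian E)) := by
  have hφ' := hφ.continuous_fderiv one_ne_zero
  have hint := hW.integrable_bilin_rotationPath hφ' hK t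
  have hslice (g : E) : ∫ ω, φ (rotationPath W t (ω, g)) (W ω) ∂P =
      ∑ a, Real.cos t * ∫ ω, fderiv ℝ φ (rotationPath W t (ω, g)) (δ a ω) (δ a ω) ∂P := by
    have hderiv (x : E) := fderiv_comp_smul_add φ (Real.cos t) (Real.sin t • g) x
    have hbound := norm_fderiv_comp_smul_add_le hK (Real.abs_cos_le_one t) (Real.sin t • g)
    have hstein := hW.integral_eq (fun x => φ (Real.cos t • x + Real.sin t • g))
      (by fun_prop) (max C K) (fun x => (hC _).trans (by simp))
      (fun x => (hbound x).trans (by simp))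
    simpa only [rotationPath, hderiv, _root_.smul_apply, smul_eq_mul,
      integral_const_mul] using hstein
  rw [integral_prod_symm _ (hW.integrable_clm_rotationPath hφ.continuous hC t
    (hW.integrable.comp_fst _)), Finset.mul_sum]
  simp only [hslice]
  rw [integral_finsetSum _ fun a _ => (hint a).integral_prod_right.const_mul _]
  simp only [integral_const_mul, integral_prod_symm _ (hint _)]

lemma sin_mul_integral_rotationPath {φ : E → E →L[ℝ] ℝ} (hφ : ContDiff ℝ 1 φ)
    (hC : ∀ x, ‖φ x‖ ≤ C) (hK : ∀ x, ‖fderiv ℝ φ x‖ ≤ K) (t : ℝ) (a : κ) :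
    Real.sin t * ∫ p, fderiv ℝ φ (rotationPath W t p) (δ a p.1) (δ a p.1)
        ∂(P.prod (stdGaussian E)) =
      ∫ p, φ (rotationPath W t p) ((inner ℝ (δ a p.1) p.2 : ℝ) • δ a p.1)
        ∂(P.prod (stdGaussian E)) := by
  have hφ' := hφ.continuous_fderiv one_ne_zero
  rw [integral_prod _ (hW.integrable_bilin_rotationPath hφ' hK t a), ← integral_const_mul,
    integral_prod _ (hW.integrable_clm_rotationPath hφ.continuous hC t
      (hW.integrable_inner_smul a))]
  refine integral_congr_ae (.of_forall fun ω => ?_)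
  let q : E → E →L[ℝ] ℝ := fun g => φ (Real.sin t • g + Real.cos t • W ω)
  have hq : ContDiff ℝ 1 q := by fun_prop
  have hderiv (g : E) := fderiv_comp_smul_add φ (Real.sin t) (Real.cos t • W ω) g
  have hbound : ∀ g, ‖fderiv ℝ q g‖ ≤ K :=
    norm_fderiv_comp_smul_add_le hK (Real.abs_sin_le_one t) (Real.cos t • W ω)
  have hbase (g : E) : Real.sin t • g + Real.cos t • W ω = rotationPath W t (ω, g) := add_comm _ _
  have hibp := congr($(integral_fderiv_stdGaussian hq hbound (δ a ω)) (δ a ω))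
  rw [ContinuousLinearMap.integral_apply _, ContinuousLinearMap.integral_apply] at hibp
  · simpa only [q, hderiv, ← hbase, _root_.smul_apply, map_smul, smul_eq_mul,
      integral_const_mul] using hibp
  · exact integrable_inner_smul_comp_stdGaussian
      (lipschitzWith_of_nnnorm_fderiv_le (hq.differentiable one_ne_zero) hbound) _
  · refine .of_bound (Continuous.aestronglyMeasurable (by fun_prop)) (K * ‖δ a ω‖)
      (.of_forall fun g => ContinuousLinearMap.le_of_opNorm_le _ (hbound g) _)

lemma integral_rotationPath_velocity {φ : E → E →L[ℝ] ℝ} (hφ : ContDiff ℝ 1 φ)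
    (hC : ∀ x, ‖φ x‖ ≤ C) (hK : ∀ x, ‖fderiv ℝ φ x‖ ≤ K) (t : ℝ) :
    ∫ p, φ (rotationPath W t p) (-Real.sin t • W p.1 + Real.cos t • p.2)
        ∂(P.prod (stdGaussian E)) =
      Real.cos t * ∫ p, φ (rotationPath W t p) (kernelDefect δ p) ∂(P.prod (stdGaussian E)) := by
  have hint {u : Ω × E → E} (hu : Integrable u (P.prod (stdGaussian E))) :=
    hW.integrable_clm_rotationPath hφ.continuous hC t hu
  have hW_int := hint (hW.integrable.comp_fst _)
  have hg_int := hint (integrable_id_stdGaussian.comp_snd P)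
  have hδ_int (a : κ) := hint (hW.integrable_inner_smul a)
  simp only [kernelDefect, map_add, map_sub, map_sum, map_smul _ (_ : ℝ) (W _),
    map_smul _ (Real.cos t), smul_eq_mul]
  rw [integral_add (hW_int.const_mul _) (hg_int.const_mul _),
    integral_sub hg_int (integrable_finsetSum _ fun a _ => hδ_int a),
    integral_finsetSum _ fun a _ => hδ_int a, integral_const_mul, integral_const_mul,
    hW.integral_rotationPath_self hφ hC hK]
  simp only [← hW.sin_mul_integral_rotationPath hφ hC hK, ← Finset.mul_sum]
  ring

lemma abs_integral_sub_integral_stdGaussian_le_of_contDiff (hf : ContDiff ℝ 2 f)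
    (hC : ∀ x, ‖fderiv ℝ f x‖ ≤ C) (hK : ∀ x, ‖fderiv ℝ (fderiv ℝ f) x‖ ≤ K) :
    |∫ ω, f (W ω) ∂P - ∫ x, f x ∂stdGaussian E| ≤
      C * ∫ p, ‖kernelDefect δ p‖ ∂(P.prod (stdGaussian E)) := by
  let T := C * ∫ p, ‖kernelDefect δ p‖ ∂(P.prod (stdGaussian E))
  let ψ : ℝ → ℝ := fun t => ∫ p, f (rotationPath W t p) ∂(P.prod (stdGaussian E))
  have hψ (t : ℝ) : HasDerivAt ψ (Real.cos t *
      ∫ p, fderiv ℝ f (rotationPath W t p) (kernelDefect δ p) ∂(P.prod (stdGaussian E))) t := by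
    rw [← hW.integral_rotationPath_velocity (hf.fderiv_right (by norm_num)) hC hK]
    have hW' := hW.integrable.comp_fst (stdGaussian E)
    have hg := integrable_id_stdGaussian.comp_snd P (E := E)
    have hrotation := hasDerivAt_integral_smul_comp_rotation (hf.of_le one_le_two) hC
      (integrable_const (1 : ℝ)) hW'.1 hg.1 (by simpa using hW') (by simpa using hg) t
    simp only [one_smul] at hrotation
    exact hrotation
  have hbound (t : ℝ) : ‖∫ p, fderiv ℝ f (rotationPath W t p) (kernelDefect δ p)
      ∂(P.prod (stdGaussian E))‖ ≤ T := by
    rw [show T = _ from (integral_const_mul _ _).symm]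
    exact norm_integral_le_of_norm_le (hW.integrable_kernelDefect.norm.const_mul _)
      (.of_forall fun p => ContinuousLinearMap.le_of_opNorm_le _ (hC _) _)
  have hmean := image_norm_le_of_norm_deriv_right_le_deriv_boundary (a := 0) (b := Real.pi / 2)
    (f := fun t => ψ t - ψ 0) (B := fun t => Real.sin t * T) (B' := fun t => Real.cos t * T)
    (fun t _ => ((hψ t).sub_const _).continuousAt.continuousWithinAt)
    (fun t _ => ((hψ t).sub_const _).hasDerivWithinAt)
    (by simp) (fun t => (Real.hasDerivAt_sin t).mul_const T)
    (fun t ht => by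
      have hcos : 0 ≤ Real.cos t :=
        Real.cos_nonneg_of_mem_Icc ⟨by linarith [ht.1, Real.pi_pos], ht.2.le⟩
      rw [norm_mul, Real.norm_of_nonneg hcos]
      exact mul_le_mul_of_nonneg_left (hbound t) hcos)
    (Set.right_mem_Icc.2 (by positivity))
  have hstart : ψ 0 = ∫ ω, f (W ω) ∂P := by
    simpa [ψ, rotationPath] using
      integral_fun_fst (μ := P) (ν := stdGaussian E) (fun ω => f (W ω))
  have hend : ψ (Real.pi / 2) = ∫ x, f x ∂stdGaussian E := by
    simpa [ψ, rotationPath] using integral_fun_snd (μ := P) (ν := stdGaussian E) f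
  rwa [Real.sin_pi_div_two, one_mul, hstart, hend, norm_sub_rev] at hmean

end Integrability

end HasSteinKernel
end SteinKernel

section Mollification

open scoped Convolution

variable {E F F' G : Type*} [NormedAddCommGroup E] [InnerProductSpace ℝ E] [FiniteDimensional ℝ E]
  [MeasurableSpace E] [BorelSpace E] [NormedAddCommGroup F] [NormedSpace ℝ F]
  [NormedAddCommGroup F'] [NormedSpace ℝ F'] [NormedAddCommGroup G] [NormedSpace ℝ G]

lemma lipschitzWith_convolution (L : F' →L[ℝ] F →L[ℝ] G) {h : E → F'} (hc : Continuous h)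
    (hs : HasCompactSupport h) {C : NNReal} {f : E → F} (hf : LipschitzWith C f) :
    LipschitzWith (‖L‖₊ * (∫ t, ‖h t‖).toNNReal * C) (h ⋆[L, volume] f) := by
  refine .of_dist_le_mul fun x y => ?_
  have hexists (x : E) : ConvolutionExistsAt h f x L volume :=
    HasCompactSupport.convolutionExists_left L hs hc hf.continuous.locallyIntegrable x
  have hint : Integrable (fun t => ‖h t‖) (volume : Measure E) :=
    (hc.integrable_of_hasCompactSupport hs).norm
  rw [dist_eq_norm, dist_eq_norm, convolution_def, convolution_def,
    ← integral_sub (hexists x) (hexists y), NNReal.coe_mul, NNReal.coe_mul, coe_nnnorm,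
    Real.coe_toNNReal _ (integral_nonneg fun t => norm_nonneg _), mul_assoc,
    ← integral_const_mul, ← integral_mul_const]
  refine norm_integral_le_of_norm_le ((hint.const_mul _).mul_const _) (.of_forall fun t => ?_)
  have hlip : ‖f (x - t) - f (y - t)‖ ≤ C * ‖x - y‖ := by
    simpa using hf.norm_sub_le (x - t) (y - t)
  rw [← map_sub]
  exact (L.le_opNorm₂ _ _).trans (by gcongr)

lemma exists_contDiff_dist_le_of_lipschitzWith [CompleteSpace F] {C : NNReal} {f : E → F}
    (hf : LipschitzWith C f) {ε : ℝ} (hε : 0 < ε) :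
    ∃ (g : E → F) (K : NNReal), ContDiff ℝ 2 g ∧ (∀ x, ‖fderiv ℝ g x‖ ≤ C) ∧
      (∀ x, ‖fderiv ℝ (fderiv ℝ g) x‖ ≤ K) ∧ ∀ x, dist (g x) (f x) ≤ C * ε := by
  let φ : ContDiffBump (0 : E) := ⟨ε / 2, ε, by positivity, by linarith⟩
  have hsupp : HasCompactSupport (φ.normed volume) := φ.hasCompactSupport_normed
  have hφ : ContDiff ℝ 2 (φ.normed volume) := φ.contDiff_normed
  have hφ' : Continuous (fderiv ℝ (φ.normed volume)) := hφ.continuous_fderiv (by norm_num)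
  have hf_loc : LocallyIntegrable f (volume : Measure E) := hf.continuous.locallyIntegrable
  let L := ContinuousLinearMap.lsmul ℝ ℝ (E := F)
  have hmass : ‖L‖₊ * (∫ t, ‖φ.normed volume t‖).toNNReal ≤ 1 := by
    simp only [Real.norm_of_nonneg (φ.nonneg_normed _), φ.integral_normed, Real.toNNReal_one,
      mul_one]
    exact ContinuousLinearMap.opNorm_lsmul_le
  have hlip := (lipschitzWith_convolution L hφ.continuous hsupp hf).weaken
    (mul_le_of_le_one_left C.2 hmass)
  have hlip' := lipschitzWith_convolution (L.precompL E) hφ' (hsupp.fderiv ℝ) hf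
  have hderiv : fderiv ℝ (φ.normed volume ⋆[L, volume] f) =
      (fderiv ℝ (φ.normed volume) ⋆[L.precompL E, volume] f) :=
    funext fun x => (hsupp.hasFDerivAt_convolution_left L (hφ.of_le one_le_two) hf_loc x).fderiv
  refine ⟨φ.normed volume ⋆[L, volume] f, _, hsupp.contDiff_convolution_left L hφ hf_loc,
    fun x => norm_fderiv_le_of_lipschitz ℝ hlip,
    fun x => norm_fderiv_le_of_lipschitz ℝ (hderiv ▸ hlip'), fun x => ?_⟩
  refine φ.dist_normed_convolution_le hf.continuous.aestronglyMeasurable fun y hy => ?_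
  exact (hf.dist_le_mul y x).trans (by gcongr; exact (Metric.mem_ball.1 hy).le)

end Mollification

lemma dist_integral_le_of_forall_dist_le {Ω E : Type*} [MeasurableSpace Ω] {μ : Measure Ω}
    [IsProbabilityMeasure μ] [NormedAddCommGroup E] [NormedSpace ℝ E] {X Y : Ω → E} {ε : ℝ}
    (hX : Integrable X μ) (hY : Integrable Y μ) (h : ∀ ω, dist (X ω) (Y ω) ≤ ε) :
    dist (∫ ω, X ω ∂μ) (∫ ω, Y ω ∂μ) ≤ ε := by
  rw [dist_eq_norm, ← integral_sub hX hY]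
  simpa using norm_integral_le_of_norm_le_const (μ := μ)
    (.of_forall fun ω => (dist_eq_norm (X ω) (Y ω)).symm.trans_le (h ω))

lemma HasSteinKernel.abs_integral_sub_integral_stdGaussian_le {Ω κ E : Type*} [MeasurableSpace Ω]
    [Fintype κ] {P : Measure Ω} [IsProbabilityMeasure P] [NormedAddCommGroup E]
    [InnerProductSpace ℝ E] [FiniteDimensional ℝ E] [MeasurableSpace E] [BorelSpace E]
    {W : Ω → E} {δ : κ → Ω → E} (hW : HasSteinKernel W δ P) {C : NNReal} {f : E → ℝ}
    (hf : LipschitzWith C f) :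
    |∫ ω, f (W ω) ∂P - ∫ x, f x ∂stdGaussian E| ≤
      C * ∫ p, ‖kernelDefect δ p‖ ∂(P.prod (stdGaussian E)) := by
  refine le_of_forall_pos_le_add fun ε hε => ?_
  obtain ⟨g, K, hg, hgC, hgK, hgf⟩ :=
    exists_contDiff_dist_le_of_lipschitzWith hf (ε := ε / (2 * (C + 1))) (by positivity)
  have hclose (x : E) : dist (g x) (f x) ≤ ε / 2 := by
    refine (hgf x).trans ?_
    rw [mul_div_assoc', div_le_div_iff₀ (by positivity) two_pos]
    nlinarith [C.coe_nonneg]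
  have hg_lip : LipschitzWith C g :=
    lipschitzWith_of_nnnorm_fderiv_le (hg.differentiable two_ne_zero) hgC
  have hdist_W := dist_integral_le_of_forall_dist_le
    (integrable_comp_of_lipschitzWith hg_lip hW.integrable)
    (integrable_comp_of_lipschitzWith hf hW.integrable) fun ω => hclose (W ω)
  have hdist_gauss := dist_integral_le_of_forall_dist_le
    (integrable_comp_of_lipschitzWith hg_lip integrable_id_stdGaussian)
    (integrable_comp_of_lipschitzWith hf integrable_id_stdGaussian) hclose
  have hsmooth := hW.abs_integral_sub_integral_stdGaussian_le_of_contDiff hg hgC hgK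
  rw [← Real.dist_eq] at hsmooth ⊢
  have htriangle := dist_triangle4_left (∫ ω, g (W ω) ∂P) (∫ x, g x ∂stdGaussian E)
    (∫ ω, f (W ω) ∂P) (∫ x, f x ∂stdGaussian E)
  linarith

section HermitianBasis

variable {ι : Type*} [DecidableEq ι]

/-- The orthonormal basis of the space of Hermitian matrices for `⟪A, B⟫ = tr (A B)` indexed by
all pairs of indices: `E_ii` for the pair `(i, i)`, and for `i ≠ j` the pairs `(i, j)` and `(j, i)`
carry the two real combinations of `E_ij` and `E_ji`. -/
noncomputable def hermitianBasis (a : ι × ι) : Matrix ι ι ℂ :=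
  ((1 + Complex.I) / 2) • single a.1 a.2 1 + ((1 - Complex.I) / 2) • single a.2 a.1 1

lemma isHermitian_hermitianBasis (a : ι × ι) : (hermitianBasis a).IsHermitian := by
  rw [Matrix.IsHermitian, hermitianBasis, conjTranspose_add, conjTranspose_smul,
    conjTranspose_smul, conjTranspose_single, conjTranspose_single, add_comm]
  simp [← sub_eq_add_neg]

lemma one_add_I_half_sq_add_one_sub_I_half_sq :
    ((1 + Complex.I) / 2) ^ 2 + ((1 - Complex.I) / 2) ^ 2 = 0 := by
  linear_combination Complex.I_sq / 2

lemma one_add_I_half_mul_one_sub_I_half :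
    (1 + Complex.I) / 2 * ((1 - Complex.I) / 2) = 1 / 2 := by
  linear_combination -Complex.I_sq / 4

variable [Fintype ι]

lemma sum_single_mul_mul_single (M : Matrix ι ι ℂ) :
    ∑ a : ι × ι, single a.1 a.2 1 * M * single a.1 a.2 1 = Mᵀ := by
  simp only [single_mul_mul_single, one_mul, mul_one, Fintype.sum_prod_type]
  exact (matrix_eq_sum_single Mᵀ).symm

lemma sum_single_mul_mul_single_swap (M : Matrix ι ι ℂ) :
    ∑ a : ι × ι, single a.1 a.2 1 * M * single a.2 a.1 1 = M.trace • 1 := by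
  simp only [single_mul_mul_single, one_mul, mul_one]
  ext i j
  simp [Fintype.sum_prod_type, Matrix.sum_apply, single_apply, one_apply, ite_and, trace]

lemma sum_hermitianBasis_mul_mul (M : Matrix ι ι ℂ) :
    ∑ a, hermitianBasis a * M * hermitianBasis a = M.trace • 1 := by
  have expand (a : ι × ι) : hermitianBasis a * M * hermitianBasis a =
      ((1 + Complex.I) / 2) ^ 2 • (single a.1 a.2 1 * M * single a.1 a.2 1) +
      (1 / 2 : ℂ) • (single a.1 a.2 1 * M * single a.2 a.1 1) +
      (1 / 2 : ℂ) • (single a.2 a.1 1 * M * single a.1 a.2 1) +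
      ((1 - Complex.I) / 2) ^ 2 • (single a.2 a.1 1 * M * single a.2 a.1 1) := by
    rw [← one_add_I_half_mul_one_sub_I_half, hermitianBasis]
    simp only [add_mul, mul_add, smul_mul_assoc, mul_smul_comm]
    module
  have swap (F : ι × ι → Matrix ι ι ℂ) : ∑ a : ι × ι, F a.swap = ∑ a, F a :=
    (Equiv.prodComm ι ι).sum_comp F
  have h₁ := swap fun a => single a.1 a.2 1 * M * single a.1 a.2 1
  have h₂ := swap fun a => single a.1 a.2 1 * M * single a.2 a.1 1
  simp only [Prod.fst_swap, Prod.snd_swap] at h₁ h₂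
  simp only [expand, Finset.sum_add_distrib, ← Finset.smul_sum, h₁, h₂,
    sum_single_mul_mul_single, sum_single_mul_mul_single_swap]
  linear_combination (norm := module)
    one_add_I_half_sq_add_one_sub_I_half_sq • (Mᵀ : Matrix ι ι ℂ)

lemma sum_hermitianBasis_mul_self :
    ∑ a, hermitianBasis a * hermitianBasis a = (Fintype.card ι : ℂ) • (1 : Matrix ι ι ℂ) := by
  simpa using sum_hermitianBasis_mul_mul (1 : Matrix ι ι ℂ)

lemma trace_hermitianBasis_mul (a : ι × ι) (Q : Matrix ι ι ℂ) :
    (hermitianBasis a * Q).trace =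
      (1 + Complex.I) / 2 * Q a.2 a.1 + (1 - Complex.I) / 2 * Q a.1 a.2 := by
  simp [hermitianBasis, add_mul, trace_single_mul]

lemma sum_trace_hermitianBasis_mul_smul (Q : Matrix ι ι ℂ) :
    ∑ a, (hermitianBasis a * Q).trace • hermitianBasis a = Q := by
  have expand (a : ι × ι) : (hermitianBasis a * Q).trace • hermitianBasis a =
      single a.1 a.2 (((1 + Complex.I) / 2) ^ 2 * Q a.2 a.1 + 1 / 2 * Q a.1 a.2) +
      single a.2 a.1 (((1 - Complex.I) / 2) ^ 2 * Q a.1 a.2 + 1 / 2 * Q a.2 a.1) := by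
    rw [trace_hermitianBasis_mul, hermitianBasis, ← one_add_I_half_mul_one_sub_I_half]
    simp only [smul_add, smul_single, smul_eq_mul, mul_one]
    congr 2 <;> ring
  ext i j
  simp only [expand, Fintype.sum_prod_type, Finset.sum_add_distrib, Matrix.sum_apply,
    Matrix.add_apply, single_apply, ite_and, Finset.sum_ite_irrel, Finset.sum_ite_eq',
    Finset.mem_univ, if_true, Finset.sum_const_zero]
  linear_combination Q j i * one_add_I_half_sq_add_one_sub_I_half_sq

lemma trace_hermitianBasis_mul_hermitianBasis (a b : ι × ι) :
    (hermitianBasis a * hermitianBasis b).trace = if a = b then 1 else 0 := by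
  obtain ⟨p, q⟩ := a
  obtain ⟨r, s⟩ := b
  rw [trace_hermitianBasis_mul]
  simp only [hermitianBasis, Matrix.add_apply, Matrix.smul_apply, single_apply, smul_eq_mul,
    Prod.mk.injEq, and_comm (a := s = _), eq_comm (a := p), eq_comm (a := q)]
  linear_combination (if r = q ∧ s = p then 1 else 0) * one_add_I_half_sq_add_one_sub_I_half_sq +
    2 * (if r = p ∧ s = q then 1 else 0) * one_add_I_half_mul_one_sub_I_half

end HermitianBasis

section ConjGenerator

variable {ι : Type*} [Fintype ι] [DecidableEq ι]

/-- The derivative `i (X M - M X)` at `t = 0` of the conjugation `exp (i t X) M exp (-i t X)`,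
as a linear map in `M`. -/
noncomputable def conjGenerator (X : Matrix ι ι ℂ) : Matrix ι ι ℂ →L[ℝ] Matrix ι ι ℂ :=
  (Complex.I • (LinearMap.mulLeft ℝ X - LinearMap.mulRight ℝ X)).toContinuousLinearMap

lemma conjGenerator_apply (X M : Matrix ι ι ℂ) :
    conjGenerator X M = Complex.I • (X * M - M * X) := rfl

lemma isHermitian_conjGenerator {X M : Matrix ι ι ℂ} (hX : X.IsHermitian) (hM : M.IsHermitian) :
    (conjGenerator X M).IsHermitian := by
  rw [Matrix.IsHermitian, conjGenerator_apply, conjTranspose_smul, conjTranspose_sub,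
    conjTranspose_mul, conjTranspose_mul, hX.eq, hM.eq, ← neg_sub, smul_neg, RCLike.star_def,
    Complex.conj_I, neg_smul, neg_neg]

lemma trace_mul_conjGenerator (X Y Z : Matrix ι ι ℂ) :
    (X * conjGenerator Y Z).trace = (Y * conjGenerator Z X).trace := by
  simp only [conjGenerator_apply, mul_smul_comm, trace_smul, mul_sub, trace_sub]
  rw [trace_mul_comm X (Y * Z), Matrix.mul_assoc, ← Matrix.mul_assoc X, trace_mul_comm (X * Z)]

lemma sum_smul_conjGenerator {α : Type*} [Fintype α] (c : α → ℝ) (X : α → Matrix ι ι ℂ)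
    (M : Matrix ι ι ℂ) : ∑ a, c a • conjGenerator (X a) M = conjGenerator (∑ a, c a • X a) M := by
  simp only [conjGenerator_apply, Finset.sum_mul, Finset.mul_sum, ← Finset.sum_sub_distrib,
    Finset.smul_sum, smul_mul_assoc, mul_smul_comm, ← smul_sub, smul_comm (c _) Complex.I]

lemma conjGenerator_conjGenerator_self (M G : Matrix ι ι ℂ) :
    conjGenerator (conjGenerator M G) M = M * M * G + G * (M * M) - (2 : ℝ) • (M * G * M) := by
  simp only [conjGenerator_apply, smul_mul_assoc, mul_smul_comm, ← smul_sub, smul_smul,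
    Complex.I_mul_I, sub_mul, mul_sub, Matrix.mul_assoc]
  module

lemma sum_conjGenerator_conjGenerator (M : Matrix ι ι ℂ) :
    ∑ a, conjGenerator (hermitianBasis a) (conjGenerator (hermitianBasis a) M) =
      (2 : ℝ) • (M.trace • 1 - (Fintype.card ι : ℝ) • M) := by
  have expand (X : Matrix ι ι ℂ) : conjGenerator X (conjGenerator X M) =
      (2 : ℝ) • (X * M * X) - X * X * M - M * (X * X) := by
    simp only [conjGenerator_apply, mul_smul_comm, smul_mul_assoc, ← smul_sub, smul_smul,
      Complex.I_mul_I, sub_mul, mul_sub, Matrix.mul_assoc]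
    module
  simp only [expand, Finset.sum_sub_distrib, ← Finset.smul_sum, ← Finset.sum_mul,
    ← Finset.mul_sum, sum_hermitianBasis_mul_mul, sum_hermitianBasis_mul_self, smul_one_mul,
    mul_smul_one, Nat.cast_smul_eq_nsmul]
  module

end ConjGenerator

section HermitianCoords

open scoped Matrix.Norms.Frobenius

variable {κ : Type*} [Fintype κ]

lemma frobenius_norm_sq (M : Matrix κ κ ℂ) : ‖M‖ ^ 2 = (M * Mᴴ).trace.re := by
  rw [frobenius_norm_def, ← Real.sqrt_eq_rpow, Real.sq_sqrt (by positivity)]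
  simp only [trace, diag_apply, mul_apply, Complex.re_sum, conjTranspose_apply, RCLike.star_def,
    Complex.mul_conj, Complex.ofReal_re, Complex.normSq_eq_norm_sq, Real.rpow_two]

lemma hsNormC_eq_norm {k : ℕ} (M : Matrix (Fin k) (Fin k) ℂ) : hsNormC M = ‖M‖ := by
  rw [hsNormC, ← frobenius_norm_sq, Real.sqrt_sq (norm_nonneg M)]

lemma ofReal_re_trace_mul {M N : Matrix κ κ ℂ} (hM : M.IsHermitian) (hN : N.IsHermitian) :
    ((M * N).trace.re : ℂ) = (M * N).trace := by
  rw [← Complex.conj_eq_iff_re, ← RCLike.star_def, ← trace_conjTranspose, conjTranspose_mul,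
    hM.eq, hN.eq, trace_mul_comm]

variable [DecidableEq κ]

/-- The coordinates `re tr (X_a M)` of `M` along `hermitianBasis`, a linear isometry on Hermitian
matrices with inverse `ofHermitianCoords`. -/
noncomputable def hermitianCoords : Matrix κ κ ℂ →L[ℝ] EuclideanSpace ℝ (κ × κ) :=
  LinearMap.toContinuousLinearMap <| (WithLp.linearEquiv 2 ℝ (κ × κ → ℝ)).symm.toLinearMap ∘ₗ
    LinearMap.pi fun a => Complex.reLm ∘ₗ traceLinearMap κ ℝ ℂ ∘ₗ
      LinearMap.mulLeft ℝ (hermitianBasis a)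

lemma hermitianCoords_apply (M : Matrix κ κ ℂ) (a : κ × κ) :
    hermitianCoords M a = (hermitianBasis a * M).trace.re := rfl

/-- The Hermitian matrix with prescribed coordinates along `hermitianBasis`. -/
noncomputable def ofHermitianCoords : EuclideanSpace ℝ (κ × κ) →L[ℝ] Matrix κ κ ℂ :=
  ∑ a, (EuclideanSpace.proj a).smulRight (hermitianBasis a)

lemma ofHermitianCoords_apply (x : EuclideanSpace ℝ (κ × κ)) :
    ofHermitianCoords x = ∑ a, x a • hermitianBasis a := by
  simp [ofHermitianCoords]

lemma isHermitian_ofHermitianCoords (x : EuclideanSpace ℝ (κ × κ)) :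
    (ofHermitianCoords x).IsHermitian := by
  simp only [Matrix.IsHermitian, ofHermitianCoords_apply, conjTranspose_sum, conjTranspose_smul,
    (isHermitian_hermitianBasis _).eq, star_trivial]

lemma ofHermitianCoords_single (a : κ × κ) :
    ofHermitianCoords (EuclideanSpace.single a 1) = hermitianBasis a := by
  simp [ofHermitianCoords_apply]

lemma hermitianCoords_ofHermitianCoords (x : EuclideanSpace ℝ (κ × κ)) :
    hermitianCoords (ofHermitianCoords x) = x := by
  ext a
  simp [hermitianCoords_apply, ofHermitianCoords_apply, trace_hermitianBasis_mul_hermitianBasis,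
    apply_ite Complex.re]

lemma ofHermitianCoords_hermitianCoords {M : Matrix κ κ ℂ} (hM : M.IsHermitian) :
    ofHermitianCoords (hermitianCoords M) = M := by
  simp only [ofHermitianCoords_apply, hermitianCoords_apply, ← Complex.coe_smul,
    ofReal_re_trace_mul (isHermitian_hermitianBasis _) hM, sum_trace_hermitianBasis_mul_smul]

lemma inner_hermitianCoords (M : Matrix κ κ ℂ) (x : EuclideanSpace ℝ (κ × κ)) :
    inner ℝ (hermitianCoords M) x = (M * ofHermitianCoords x).trace.re := by
  rw [trace_mul_comm, PiLp.inner_apply]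
  simp [hermitianCoords_apply, ofHermitianCoords_apply, Finset.sum_mul, trace_sum]

lemma norm_hermitianCoords {M : Matrix κ κ ℂ} (hM : M.IsHermitian) :
    ‖hermitianCoords M‖ = ‖M‖ := by
  rw [← sq_eq_sq₀ (norm_nonneg _) (norm_nonneg _), ← real_inner_self_eq_norm_sq,
    inner_hermitianCoords, ofHermitianCoords_hermitianCoords hM, frobenius_norm_sq, hM.eq]

lemma norm_ofHermitianCoords (x : EuclideanSpace ℝ (κ × κ)) : ‖ofHermitianCoords x‖ = ‖x‖ := by
  rw [← norm_hermitianCoords (isHermitian_ofHermitianCoords x), hermitianCoords_ofHermitianCoords]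

end HermitianCoords

section InclusionMatrix

variable {ι κ : Type*} [DecidableEq ι] (e : κ ↪ ι)

/-- The isometry `ℂ^κ → ℂ^ι` induced by an inclusion of indices; conjugating by it passes to the
block with index set `κ`. -/
def inclusionMatrix : Matrix ι κ ℂ := (1 : Matrix ι ι ℂ).submatrix id e

variable [Fintype ι]

lemma conjTranspose_inclusionMatrix_mul_mul (M : Matrix ι ι ℂ) :
    (inclusionMatrix e)ᴴ * M * inclusionMatrix e = M.submatrix e e := by
  rw [inclusionMatrix, conjTranspose_submatrix, conjTranspose_one]
  exact (congrArg (· * _) (one_submatrix_mul e (Equiv.refl ι) M)).trans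
    (mul_submatrix_one (Equiv.refl ι) e _)

lemma conjTranspose_inclusionMatrix_mul_self [DecidableEq κ] :
    (inclusionMatrix e)ᴴ * inclusionMatrix e = 1 := by
  simpa using conjTranspose_inclusionMatrix_mul_mul e 1

end InclusionMatrix

section Block

open scoped Matrix.Norms.Frobenius

variable {ι κ : Type*} [Fintype κ] [DecidableEq κ] (e : κ ↪ ι)

/-- The coordinates of the block with index set `κ`. -/
noncomputable def blockCoords : Matrix ι ι ℂ →L[ℝ] EuclideanSpace ℝ (κ × κ) :=
  hermitianCoords ∘L ⟨⟨⟨fun M => M.submatrix e e, fun _ _ => rfl⟩, fun _ _ => rfl⟩, by fun_prop⟩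

lemma blockCoords_apply (M : Matrix ι ι ℂ) :
    blockCoords e M = hermitianCoords (M.submatrix e e) := rfl

lemma norm_blockCoords {M : Matrix ι ι ℂ} (hM : M.IsHermitian) :
    ‖blockCoords e M‖ = ‖M.submatrix e e‖ :=
  norm_hermitianCoords (hM.submatrix e)

variable [Fintype ι] [DecidableEq ι]

lemma inner_blockCoords (M : Matrix ι ι ℂ) (g : EuclideanSpace ℝ (κ × κ)) :
    inner ℝ (blockCoords e M) g =
      (inclusionMatrix e * ofHermitianCoords g * (inclusionMatrix e)ᴴ * M).trace.re := by
  rw [blockCoords_apply, inner_hermitianCoords, ← conjTranspose_inclusionMatrix_mul_mul,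
    trace_mul_comm, Matrix.mul_assoc _ M, ← Matrix.mul_assoc (ofHermitianCoords g),
    ← Matrix.mul_assoc, trace_mul_comm]
  simp only [Matrix.mul_assoc]

lemma sum_inner_smul_blockCoords_conjGenerator {A : Matrix ι ι ℂ} (hA : A.IsHermitian)
    (g : EuclideanSpace ℝ (κ × κ)) :
    ∑ a, (inner ℝ (blockCoords e (conjGenerator (hermitianBasis a) A)) g : ℝ) •
        blockCoords e (conjGenerator (hermitianBasis a) A) =
      hermitianCoords ((A * A).submatrix e e * ofHermitianCoords g +
        ofHermitianCoords g * (A * A).submatrix e e -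
        (2 : ℝ) • (A.submatrix e e * ofHermitianCoords g * A.submatrix e e)) := by
  set G := inclusionMatrix e * ofHermitianCoords g * (inclusionMatrix e)ᴴ with hG
  have hG_herm : G.IsHermitian :=
    isHermitian_mul_mul_conjTranspose _ (isHermitian_ofHermitianCoords g)
  have coeff (a : ι × ι) : inner ℝ (blockCoords e (conjGenerator (hermitianBasis a) A)) g =
      hermitianCoords (conjGenerator A G) a := by
    rw [inner_blockCoords, trace_mul_conjGenerator, hermitianCoords_apply]
  simp only [coeff, ← map_smul (blockCoords e), ← map_sum, sum_smul_conjGenerator,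
    ← ofHermitianCoords_apply]
  rw [ofHermitianCoords_hermitianCoords (isHermitian_conjGenerator hA hG_herm),
    conjGenerator_conjGenerator_self, blockCoords_apply]
  congr 1
  simp only [← conjTranspose_inclusionMatrix_mul_mul]
  have isometry := conjTranspose_inclusionMatrix_mul_self e
  have isometry_assoc (M : Matrix κ ι ℂ) :
      (inclusionMatrix e)ᴴ * (inclusionMatrix e * M) = M := by
    rw [← Matrix.mul_assoc, isometry, Matrix.one_mul]
  simp only [hG, Matrix.mul_add, Matrix.mul_sub, Matrix.add_mul, Matrix.sub_mul, Matrix.mul_smul,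
    Matrix.smul_mul, Matrix.mul_assoc, isometry, isometry_assoc, Matrix.mul_one]

lemma sum_norm_sq_eq_sum_inner_sum {α β : Type*} [Fintype α] [Fintype β] [DecidableEq β]
    (v : α → EuclideanSpace ℝ β) :
    ∑ a, ‖v a‖ ^ 2 = ∑ b, inner ℝ (∑ a, (inner ℝ (v a) (EuclideanSpace.single b 1) : ℝ) • v a)
      (EuclideanSpace.single b 1) := by
  simp only [EuclideanSpace.norm_sq_eq, sum_inner, inner_smul_left,
    EuclideanSpace.inner_single_right]
  rw [Finset.sum_comm]
  simp [sq]

lemma sum_norm_sq_blockCoords_conjGenerator {A : Matrix ι ι ℂ} (hA : A.IsHermitian) :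
    ∑ a, ‖blockCoords e (conjGenerator (hermitianBasis a) A)‖ ^ 2 =
      2 * (Fintype.card κ * ((A * A).submatrix e e).trace.re -
        (A.submatrix e e).trace.re ^ 2) := by
  set S := (A * A).submatrix e e
  set B := A.submatrix e e
  have expand (X : Matrix κ κ ℂ) : (S * X + X * S - (2 : ℝ) • (B * X * B)) * X =
      S * (X * X) + X * S * X - (2 : ℝ) • (B * (X * B * X)) := by
    simp only [Matrix.add_mul, Matrix.sub_mul, Matrix.smul_mul, Matrix.mul_assoc]
  have sum_eq : ∑ p, (S * hermitianBasis p + hermitianBasis p * S -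
      (2 : ℝ) • (B * hermitianBasis p * B)) * hermitianBasis p =
      (Fintype.card κ : ℂ) • S + S.trace • 1 - (2 : ℝ) • (B.trace • B) := by
    simp only [expand, Finset.sum_add_distrib, Finset.sum_sub_distrib, ← Finset.mul_sum,
      ← Finset.smul_sum, sum_hermitianBasis_mul_self, sum_hermitianBasis_mul_mul, mul_smul_one]
  have trace_B : (B.trace.re : ℂ) = B.trace := by
    simpa using ofReal_re_trace_mul (hA.submatrix e) isHermitian_one
  simp only [sum_norm_sq_eq_sum_inner_sum, sum_inner_smul_blockCoords_conjGenerator e hA,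
    inner_hermitianCoords, ofHermitianCoords_single, ← Complex.re_sum, ← trace_sum]
  rw [sum_eq, ← trace_B]
  simp only [Complex.coe_smul, trace_sub, trace_add, trace_smul, trace_one, smul_eq_mul,
    Complex.sub_re, Complex.add_re, Complex.smul_re, Complex.mul_re, Complex.natCast_re,
    Complex.natCast_im, Complex.ofReal_re, zero_mul, sub_zero]
  ring

end Block

instance matrixBorelSpace {m n : Type*} [Countable m] [Countable n] :
    BorelSpace (Matrix m n ℂ) :=
  inferInstanceAs (BorelSpace (m → n → ℂ))

instance matrixSecondCountableTopology {m n : Type*} [Countable m] [Countable n] :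
    SecondCountableTopology (Matrix m n ℂ) :=
  inferInstanceAs (SecondCountableTopology (m → n → ℂ))

instance matrixMetrizableSpace {m n : Type*} [Countable m] [Countable n] :
    TopologicalSpace.MetrizableSpace (Matrix m n ℂ) :=
  inferInstanceAs (TopologicalSpace.MetrizableSpace (m → n → ℂ))

section UnitaryConjugation

open scoped Matrix.Norms.Frobenius

variable {ι : Type*} [Fintype ι] [DecidableEq ι]

lemma conjTranspose_mul_self_of_mem_unitaryGroup {V : Matrix ι ι ℂ} (hV : V ∈ unitaryGroup ι ℂ) :
    Vᴴ * V = 1 :=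
  mem_unitaryGroup_iff'.1 hV

lemma trace_unitary_conj {V : Matrix ι ι ℂ} (hV : V ∈ unitaryGroup ι ℂ) (M : Matrix ι ι ℂ) :
    (V * M * Vᴴ).trace = M.trace := by
  rw [trace_mul_cycle, conjTranspose_mul_self_of_mem_unitaryGroup hV, Matrix.one_mul]

lemma unitary_conj_mul_unitary_conj {V : Matrix ι ι ℂ} (hV : V ∈ unitaryGroup ι ℂ)
    (M N : Matrix ι ι ℂ) : V * M * Vᴴ * (V * N * Vᴴ) = V * (M * N) * Vᴴ := by
  calc V * M * Vᴴ * (V * N * Vᴴ) = V * M * (Vᴴ * V) * N * Vᴴ := by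
        simp only [Matrix.mul_assoc]
    _ = V * (M * N) * Vᴴ := by
        rw [conjTranspose_mul_self_of_mem_unitaryGroup hV, Matrix.mul_one, Matrix.mul_assoc V]

lemma frobenius_norm_unitary_conj {V : Matrix ι ι ℂ} (hV : V ∈ unitaryGroup ι ℂ)
    (M : Matrix ι ι ℂ) : ‖V * M * Vᴴ‖ = ‖M‖ := by
  have adjoint_eq : (V * M * Vᴴ)ᴴ = V * Mᴴ * Vᴴ := by
    simp only [conjTranspose_mul, conjTranspose_conjTranspose, Matrix.mul_assoc]
  rw [← sq_eq_sq₀ (norm_nonneg _) (norm_nonneg _), frobenius_norm_sq, frobenius_norm_sq,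
    adjoint_eq, unitary_conj_mul_unitary_conj hV, trace_unitary_conj hV]

/-- The one-parameter group `t ↦ exp (i t X)`, unitary when `X` is Hermitian. -/
noncomputable def unitaryFlow (X : Matrix ι ι ℂ) (t : ℝ) : Matrix ι ι ℂ :=
  NormedSpace.exp (t • (Complex.I • X))

lemma unitaryFlow_zero (X : Matrix ι ι ℂ) : unitaryFlow X 0 = 1 := by
  simp [unitaryFlow]

lemma conjTranspose_unitaryFlow {X : Matrix ι ι ℂ} (hX : X.IsHermitian) (t : ℝ) :
    (unitaryFlow X t)ᴴ = NormedSpace.exp (t • -(Complex.I • X)) := by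
  rw [unitaryFlow, ← exp_conjTranspose, conjTranspose_smul, conjTranspose_smul, hX.eq]
  simp

lemma unitaryFlow_mem_unitaryGroup {X : Matrix ι ι ℂ} (hX : X.IsHermitian) (t : ℝ) :
    unitaryFlow X t ∈ unitaryGroup ι ℂ := by
  have commute : Commute (t • (Complex.I • X)) (-(t • (Complex.I • X))) :=
    (Commute.refl _).neg_right
  rw [mem_unitaryGroup_iff, star_eq_conjTranspose, conjTranspose_unitaryFlow hX, unitaryFlow,
    smul_neg, ← exp_add_of_commute _ _ commute, add_neg_cancel, NormedSpace.exp_zero]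

lemma hasDerivAt_unitaryFlow_conj {X : Matrix ι ι ℂ} (hX : X.IsHermitian) (M : Matrix ι ι ℂ)
    (t : ℝ) : HasDerivAt (fun t => unitaryFlow X t * M * (unitaryFlow X t)ᴴ)
      (conjGenerator X (unitaryFlow X t * M * (unitaryFlow X t)ᴴ)) t := by
  have hV : HasDerivAt (unitaryFlow X) (Complex.I • X * unitaryFlow X t) t :=
    hasDerivAt_exp_smul_const' (Complex.I • X) t
  have hVstar : HasDerivAt (fun t => (unitaryFlow X t)ᴴ)
      ((unitaryFlow X t)ᴴ * -(Complex.I • X)) t := by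
    simp only [conjTranspose_unitaryFlow hX]
    exact hasDerivAt_exp_smul_const (-(Complex.I • X)) t
  refine ((hV.mul_const M).mul hVstar).congr_deriv ?_
  simp only [conjGenerator_apply, sub_eq_add_neg, smul_add, smul_neg, smul_mul_assoc,
    mul_smul_comm, Matrix.mul_assoc, Matrix.mul_neg]

end UnitaryConjugation

section UnitaryInvariance

open scoped Matrix.Norms.Frobenius

variable {ι Ω : Type*} [Fintype ι] [DecidableEq ι] [MeasurableSpace Ω]

/-- A bounded random matrix `A` whose distribution under `P` is invariant under conjugation by
every fixed unitary matrix. -/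
structure IsUnitarilyInvariant (A : Ω → Matrix ι ι ℂ) (P : Measure Ω) : Prop where
  measurable : Measurable A
  exists_norm_le : ∃ R, ∀ ω, ‖A ω‖ ≤ R
  map_conj : ∀ V ∈ unitaryGroup ι ℂ, P.map (fun ω => V * A ω * Vᴴ) = P.map A

namespace IsUnitarilyInvariant

variable {A : Ω → Matrix ι ι ℂ} {P : Measure Ω}

lemma measurable_conj (hA : IsUnitarilyInvariant A P) (V : Matrix ι ι ℂ) :
    Measurable fun ω => V * A ω * Vᴴ :=
  (by fun_prop : Continuous fun M : Matrix ι ι ℂ => V * M * Vᴴ).measurable.comp hA.measurable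

lemma comp (hA : IsUnitarilyInvariant A P) {φ : Matrix ι ι ℂ → Matrix ι ι ℂ} (hφ : Continuous φ)
    (hφ_conj : ∀ V ∈ unitaryGroup ι ℂ, ∀ M, φ (V * M * Vᴴ) = V * φ M * Vᴴ) :
    IsUnitarilyInvariant (fun ω => φ (A ω)) P := by
  obtain ⟨R, hR⟩ := hA.exists_norm_le
  obtain ⟨C, hC⟩ := (isCompact_closedBall (0 : Matrix ι ι ℂ) R).exists_bound_of_continuousOn
    hφ.continuousOn
  refine ⟨hφ.measurable.comp hA.measurable,
    ⟨C, fun ω => hC _ (mem_closedBall_zero_iff.2 (hR ω))⟩, fun V hV => ?_⟩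
  calc P.map (fun ω => V * φ (A ω) * Vᴴ) = (P.map fun ω => V * A ω * Vᴴ).map φ := by
        rw [Measure.map_map hφ.measurable (hA.measurable_conj V)]
        simp only [Function.comp_def, hφ_conj V hV]
    _ = P.map fun ω => φ (A ω) := by
        rw [hA.map_conj V hV, Measure.map_map hφ.measurable hA.measurable]
        rfl

lemma smul (hA : IsUnitarilyInvariant A P) (c : ℝ) :
    IsUnitarilyInvariant (fun ω => c • A ω) P :=
  hA.comp (continuous_const_smul c) fun V _ M => by rw [mul_smul_comm, smul_mul_assoc]

lemma mul_self (hA : IsUnitarilyInvariant A P) : IsUnitarilyInvariant (fun ω => A ω * A ω) P :=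
  hA.comp (φ := fun M => M * M) (by fun_prop) fun _ hV M => unitary_conj_mul_unitary_conj hV M M

lemma sub_smul_one (hA : IsUnitarilyInvariant A P) (c : ℝ) :
    IsUnitarilyInvariant (fun ω => A ω - c • 1) P :=
  hA.comp (φ := fun M => M - c • 1) (by fun_prop) fun V hV M => by
    rw [Matrix.mul_sub, Matrix.sub_mul, mul_smul_comm, smul_mul_assoc, Matrix.mul_one,
      ← star_eq_conjTranspose, mem_unitaryGroup_iff.1 hV]

lemma integral_conj (hA : IsUnitarilyInvariant A P) {F : Type*} [NormedAddCommGroup F]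
    [NormedSpace ℝ F] {G : Matrix ι ι ℂ → F} (hG : Continuous G) {V : Matrix ι ι ℂ}
    (hV : V ∈ unitaryGroup ι ℂ) : ∫ ω, G (V * A ω * Vᴴ) ∂P = ∫ ω, G (A ω) ∂P := by
  rw [← integral_map (hA.measurable_conj V).aemeasurable hG.aestronglyMeasurable, hA.map_conj V hV,
    integral_map hA.measurable.aemeasurable hG.aestronglyMeasurable]

variable [IsFiniteMeasure P]

lemma memLp_comp (hA : IsUnitarilyInvariant A P) {F : Type*} [NormedAddCommGroup F]
    {G : Matrix ι ι ℂ → F} (hG : Continuous G) (p : ENNReal) :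
    MemLp (fun ω => G (A ω)) p P := by
  obtain ⟨R, hR⟩ := hA.exists_norm_le
  obtain ⟨C, hC⟩ := (isCompact_closedBall (0 : Matrix ι ι ℂ) R).exists_bound_of_continuousOn
    hG.continuousOn
  exact .of_bound (hG.comp_aestronglyMeasurable hA.measurable.aestronglyMeasurable) C
    (.of_forall fun ω => hC _ (mem_closedBall_zero_iff.2 (hR ω)))

lemma integrable_comp (hA : IsUnitarilyInvariant A P) {F : Type*} [NormedAddCommGroup F]
    {G : Matrix ι ι ℂ → F} (hG : Continuous G) : Integrable (fun ω => G (A ω)) P :=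
  memLp_one_iff_integrable.1 (hA.memLp_comp hG 1)

-- Differentiate the constant function `t ↦ ∫ Φ (exp (itX) A exp (-itX))` at `t = 0`.
lemma integral_fderiv_conjGenerator (hA : IsUnitarilyInvariant A P) {X : Matrix ι ι ℂ}
    (hX : X.IsHermitian) {F : Type*} [NormedAddCommGroup F] [NormedSpace ℝ F]
    {Φ : Matrix ι ι ℂ → F} (hΦ : ContDiff ℝ 1 Φ) :
    ∫ ω, fderiv ℝ Φ (A ω) (conjGenerator X (A ω)) ∂P = 0 := by
  have hderiv_cont : Continuous fun M => fderiv ℝ Φ M (conjGenerator X M) := by fun_prop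
  let A' (t : ℝ) (ω : Ω) := unitaryFlow X t * A ω * (unitaryFlow X t)ᴴ
  have hA'_meas (t : ℝ) : AEStronglyMeasurable (A' t) P :=
    (by fun_prop : Continuous fun M => unitaryFlow X t * M * (unitaryFlow X t)ᴴ)
      |>.comp_aestronglyMeasurable hA.measurable.aestronglyMeasurable
  have hA'_zero : A' 0 = A := by
    funext ω
    simp [A', unitaryFlow_zero]
  obtain ⟨R, hR⟩ := hA.exists_norm_le
  obtain ⟨C, hC⟩ := (isCompact_closedBall (0 : Matrix ι ι ℂ) R).exists_bound_of_continuousOn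
    hderiv_cont.continuousOn
  have hbound (t : ℝ) (ω : Ω) : ‖fderiv ℝ Φ (A' t ω) (conjGenerator X (A' t ω))‖ ≤ C := by
    refine hC _ (mem_closedBall_zero_iff.2 ?_)
    rw [frobenius_norm_unitary_conj (unitaryFlow_mem_unitaryGroup hX t)]
    exact hR ω
  have hderiv (t : ℝ) (ω : Ω) : HasDerivAt (fun t => Φ (A' t ω))
      (fderiv ℝ Φ (A' t ω) (conjGenerator X (A' t ω))) t :=
    (hΦ.differentiable one_ne_zero _).hasFDerivAt.comp_hasDerivAt t
      (hasDerivAt_unitaryFlow_conj hX (A ω) t)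
  have hderiv_integral := (hasDerivAt_integral_of_dominated_loc_of_deriv_le (μ := P)
    (F := fun t ω => Φ (A' t ω)) (x₀ := 0) (bound := fun _ => C) Filter.univ_mem
    (.of_forall fun t => hΦ.continuous.comp_aestronglyMeasurable (hA'_meas t))
    (by simpa only [hA'_zero] using hA.integrable_comp hΦ.continuous)
    (hderiv_cont.comp_aestronglyMeasurable (hA'_meas 0))
    (.of_forall fun ω t _ => hbound t ω) (integrable_const C)
    (.of_forall fun ω t _ => hderiv t ω)).2
  have hconst : (fun t => ∫ ω, Φ (A' t ω) ∂P) = fun _ => ∫ ω, Φ (A ω) ∂P :=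
    funext fun t => hA.integral_conj hΦ.continuous (unitaryFlow_mem_unitaryGroup hX t)
  rw [hconst, hA'_zero] at hderiv_integral
  exact hderiv_integral.unique (hasDerivAt_const _ _)

variable {E : Type*} [NormedAddCommGroup E] [NormedSpace ℝ E]

lemma integral_fderiv_add_integral_eq_zero (hA : IsUnitarilyInvariant A P) {X : Matrix ι ι ℂ}
    (hX : X.IsHermitian) (ℓ : Matrix ι ι ℂ →L[ℝ] E) {F : E → E →L[ℝ] ℝ} (hF : ContDiff ℝ 1 F) :
    ∫ ω, fderiv ℝ F (ℓ (A ω)) (ℓ (conjGenerator X (A ω))) (ℓ (conjGenerator X (A ω))) ∂P +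
      ∫ ω, F (ℓ (A ω)) (ℓ (conjGenerator X (conjGenerator X (A ω)))) ∂P = 0 := by
  rw [← integral_add
      (hA.integrable_comp (G := fun M => fderiv ℝ F (ℓ M) (ℓ (conjGenerator X M))
        (ℓ (conjGenerator X M))) (by fun_prop))
      (hA.integrable_comp (G := fun M => F (ℓ M) (ℓ (conjGenerator X (conjGenerator X M))))
        (by fun_prop)),
    ← hA.integral_fderiv_conjGenerator hX
      (by fun_prop : ContDiff ℝ 1 fun M => F (ℓ M) (ℓ (conjGenerator X M)))]
  refine integral_congr_ae (.of_forall fun ω => ?_)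
  have hFℓ : HasFDerivAt (fun M => F (ℓ M)) ((fderiv ℝ F (ℓ (A ω))).comp ℓ) (A ω) :=
    (hF.differentiable one_ne_zero _).hasFDerivAt.comp _ ℓ.hasFDerivAt
  have hprod := (hFℓ.clm_apply (ℓ.comp (conjGenerator X)).hasFDerivAt).fderiv
  refine ((DFunLike.congr_fun hprod _).trans ?_).symm
  exact add_comm _ _

theorem sum_integral_fderiv_conjGenerator (hA : IsUnitarilyInvariant A P)
    (ℓ : Matrix ι ι ℂ →L[ℝ] E) {F : E → E →L[ℝ] ℝ} (hF : ContDiff ℝ 1 F) :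
    ∑ a, ∫ ω, fderiv ℝ F (ℓ (A ω)) (ℓ (conjGenerator (hermitianBasis a) (A ω)))
        (ℓ (conjGenerator (hermitianBasis a) (A ω))) ∂P =
      2 * ∫ ω, F (ℓ (A ω)) (ℓ ((Fintype.card ι : ℝ) • A ω - (A ω).trace • 1)) ∂P := by
  have second_order (a : ι × ι) := eq_neg_of_add_eq_zero_left
    (hA.integral_fderiv_add_integral_eq_zero (isHermitian_hermitianBasis a) ℓ hF)
  simp only [second_order]
  rw [Finset.sum_neg_distrib,
    ← integral_finsetSum _ fun a _ => hA.integrable_comp (G := fun M => F (ℓ M)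
      (ℓ (conjGenerator (hermitianBasis a) (conjGenerator (hermitianBasis a) M)))) (by fun_prop),
    ← integral_const_mul, ← integral_neg]
  refine integral_congr_ae (.of_forall fun ω => ?_)
  simp only [← map_sum, sum_conjGenerator_conjGenerator]
  rw [← map_neg, ← map_neg, ← smul_neg, neg_sub, map_smul, map_smul, smul_eq_mul]

end IsUnitarilyInvariant

end UnitaryInvariance

section UnitaryInvariantMoments

open scoped Matrix.Norms.Frobenius

variable {ι κ Ω : Type*} [Fintype ι] [DecidableEq ι] [Fintype κ]
  [MeasurableSpace Ω] {P : Measure Ω}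

lemma isUnitarilyInvariant_conj {U : Ω → Matrix ι ι ℂ} (hU : Measurable U)
    (hU_mem : ∀ ω, U ω ∈ unitaryGroup ι ℂ)
    (hU_haar : ∀ V ∈ unitaryGroup ι ℂ, P.map (fun ω => V * U ω) = P.map U) (M : Matrix ι ι ℂ) :
    IsUnitarilyInvariant (fun ω => U ω * M * (U ω)ᴴ) P := by
  have hconj : Measurable fun V : Matrix ι ι ℂ => V * M * Vᴴ :=
    Continuous.measurable (by fun_prop)
  refine ⟨hconj.comp hU, ⟨‖M‖, fun ω => (frobenius_norm_unitary_conj (hU_mem ω) M).le⟩,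
    fun V hV => ?_⟩
  have hVU : Measurable fun ω => V * U ω :=
    (by fun_prop : Continuous fun N : Matrix ι ι ℂ => V * N).measurable.comp hU
  calc P.map (fun ω => V * (U ω * M * (U ω)ᴴ) * Vᴴ)
      = (P.map fun ω => V * U ω).map fun N => N * M * Nᴴ := by
        rw [Measure.map_map hconj hVU]
        simp only [Function.comp_def, conjTranspose_mul, Matrix.mul_assoc]
    _ = P.map fun ω => U ω * M * (U ω)ᴴ := by
        rw [hU_haar V hV, Measure.map_map hconj hU]
        rfl

/-- The Stein kernel of `ℓ ∘ A`, for a linear map `ℓ`, given by the infinitesimal conjugations of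
`A` along `hermitianBasis`. The normalization matches the factor `2 n` in
`sum_conjGenerator_conjGenerator`. -/
noncomputable def conjKernel {E : Type*} [NormedAddCommGroup E] [NormedSpace ℝ E]
    (ℓ : Matrix ι ι ℂ →L[ℝ] E) (A : Ω → Matrix ι ι ℂ) (a : ι × ι) (ω : Ω) : E :=
  (√(2 * Fintype.card ι))⁻¹ • ℓ (conjGenerator (hermitianBasis a) (A ω))

namespace IsUnitarilyInvariant

variable {A : Ω → Matrix ι ι ℂ} [IsFiniteMeasure P]

lemma card_mul_integral (hA : IsUnitarilyInvariant A P) (ℓ : Matrix ι ι ℂ →L[ℝ] ℝ) :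
    Fintype.card ι * ∫ ω, ℓ (A ω) ∂P = ∫ ω, ℓ ((A ω).trace • 1) ∂P := by
  have hstein := hA.sum_integral_fderiv_conjGenerator ℓ
    (contDiff_const (c := ContinuousLinearMap.id ℝ ℝ))
  have hsub : ∫ ω, ℓ ((Fintype.card ι : ℝ) • A ω - (A ω).trace • 1) ∂P = 0 := by
    simpa using hstein.symm
  simp only [map_sub, map_smul] at hsub
  rw [integral_sub (hA.integrable_comp (G := fun M => (Fintype.card ι : ℝ) • ℓ M) (by fun_prop))
    (hA.integrable_comp (G := fun M => ℓ (M.trace • 1)) (by fun_prop)),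
    integral_smul, smul_eq_mul] at hsub
  exact sub_eq_zero.1 hsub

lemma hasSteinKernel_conjKernel [Nonempty ι] {E : Type*} [NormedAddCommGroup E]
    [InnerProductSpace ℝ E] (hA : IsUnitarilyInvariant A P) (hA_trace : ∀ ω, (A ω).trace = 0)
    (ℓ : Matrix ι ι ℂ →L[ℝ] E) : HasSteinKernel (fun ω => ℓ (A ω)) (conjKernel ℓ A) P where
  integrable := hA.integrable_comp ℓ.continuous
  memLp_two a := hA.memLp_comp
    (G := fun M => (√(2 * Fintype.card ι))⁻¹ • ℓ (conjGenerator (hermitianBasis a) M))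
    (by fun_prop) 2
  integral_eq F hF _ _ _ := by
    have hcard : (0 : ℝ) < 2 * Fintype.card ι := by
      have := Fintype.card_pos (α := ι)
      positivity
    have hstein := hA.sum_integral_fderiv_conjGenerator ℓ hF
    simp only [hA_trace, zero_smul, sub_zero, map_smul, smul_eq_mul, integral_const_mul,
      ← mul_assoc] at hstein
    simp only [conjKernel, map_smul, _root_.smul_apply, smul_eq_mul, integral_const_mul,
      ← Finset.mul_sum, hstein, ← mul_assoc]
    rw [← mul_inv, Real.mul_self_sqrt hcard.le, mul_assoc _ 2,
      inv_mul_cancel₀ hcard.ne', one_mul]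

lemma card_mul_integral_trace_submatrix (hA : IsUnitarilyInvariant A P) (e : κ ↪ ι) :
    Fintype.card ι * ∫ ω, ((A ω).submatrix e e).trace.re ∂P =
      Fintype.card κ * ∫ ω, (A ω).trace.re ∂P := by
  let ℓ : Matrix ι ι ℂ →L[ℝ] ℝ := LinearMap.toContinuousLinearMap
    { toFun M := (M.submatrix e e).trace.re
      map_add' M N := by simp [submatrix_add]
      map_smul' c M := by simp [submatrix_smul] }
  have hℓ (z : ℂ) : ℓ (z • 1) = Fintype.card κ * z.re := by
    simp [ℓ, Matrix.trace]
  have hmoment := hA.card_mul_integral ℓ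
  simp only [hℓ, integral_const_mul] at hmoment
  exact hmoment

lemma sum_integral_norm_sq_conjGenerator {E : Type*} [NormedAddCommGroup E]
    [InnerProductSpace ℝ E] (hA : IsUnitarilyInvariant A P) (hA_trace : ∀ ω, (A ω).trace = 0)
    (ℓ : Matrix ι ι ℂ →L[ℝ] E) :
    ∑ a, ∫ ω, ‖ℓ (conjGenerator (hermitianBasis a) (A ω))‖ ^ 2 ∂P =
      2 * (Fintype.card ι * ∫ ω, ‖ℓ (A ω)‖ ^ 2 ∂P) := by
  let F : E →L[ℝ] E →L[ℝ] ℝ := innerSL ℝ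
  have hF (x : E) : F x x = ‖x‖ ^ 2 := real_inner_self_eq_norm_sq x
  have hstein := hA.sum_integral_fderiv_conjGenerator ℓ F.contDiff
  simpa only [ContinuousLinearMap.fderiv, hA_trace, zero_smul, sub_zero, map_smul, smul_eq_mul,
    integral_const_mul, hF] using hstein

variable [DecidableEq κ]

lemma card_mul_integral_norm_sq_submatrix_le (hA : IsUnitarilyInvariant A P)
    (hA_herm : ∀ ω, (A ω).IsHermitian) (hA_trace : ∀ ω, (A ω).trace = 0) (e : κ ↪ ι) :
    Fintype.card ι * ∫ ω, ‖(A ω).submatrix e e‖ ^ 2 ∂P ≤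
      Fintype.card κ * ∫ ω, ((A ω * A ω).submatrix e e).trace.re ∂P := by
  have hintegrable {G : Matrix ι ι ℂ → ℝ} (hG : Continuous G) := hA.integrable_comp hG
  have hstein := hA.sum_integral_norm_sq_conjGenerator hA_trace (blockCoords e)
  rw [← integral_finsetSum _ fun a _ => hintegrable
    (by fun_prop : Continuous fun M => ‖blockCoords e (conjGenerator (hermitianBasis a) M)‖ ^ 2)]
    at hstein
  simp only [sum_norm_sq_blockCoords_conjGenerator e (hA_herm _),
    norm_blockCoords e (hA_herm _), integral_const_mul] at hstein
  rw [← mul_left_cancel₀ two_ne_zero hstein, ← integral_const_mul]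
  refine integral_mono (hintegrable (G := fun M => Fintype.card κ *
    ((M * M).submatrix e e).trace.re - (M.submatrix e e).trace.re ^ 2) (by fun_prop))
    (hintegrable (G := fun M => Fintype.card κ * ((M * M).submatrix e e).trace.re)
      (by fun_prop)) fun ω => ?_
  exact sub_le_self _ (sq_nonneg _)

lemma card_sq_mul_integral_norm_sq_submatrix_le (hA : IsUnitarilyInvariant A P)
    (hA_herm : ∀ ω, (A ω).IsHermitian) (hA_trace : ∀ ω, (A ω).trace = 0) (e : κ ↪ ι) :
    Fintype.card ι ^ 2 * ∫ ω, ‖(A ω).submatrix e e‖ ^ 2 ∂P ≤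
      Fintype.card κ ^ 2 * ∫ ω, ‖A ω‖ ^ 2 ∂P := by
  have htrace := hA.mul_self.card_mul_integral_trace_submatrix e
  have hnorm (ω : Ω) : (A ω * A ω).trace.re = ‖A ω‖ ^ 2 := by
    rw [frobenius_norm_sq, (hA_herm ω).eq]
  simp only [hnorm] at htrace
  calc (Fintype.card ι : ℝ) ^ 2 * ∫ ω, ‖(A ω).submatrix e e‖ ^ 2 ∂P
      = Fintype.card ι * (Fintype.card ι * ∫ ω, ‖(A ω).submatrix e e‖ ^ 2 ∂P) := by ring
    _ ≤ Fintype.card ι *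
        (Fintype.card κ * ∫ ω, ((A ω * A ω).submatrix e e).trace.re ∂P) :=
        mul_le_mul_of_nonneg_left (hA.card_mul_integral_norm_sq_submatrix_le hA_herm hA_trace e)
          (Nat.cast_nonneg _)
    _ = Fintype.card κ ^ 2 * ∫ ω, ‖A ω‖ ^ 2 ∂P := by rw [mul_left_comm, htrace]; ring

end IsUnitarilyInvariant

end UnitaryInvariantMoments

section FrobeniusNorm

open scoped Matrix.Norms.Frobenius

variable {ι : Type*} [Fintype ι] [DecidableEq ι]

lemma frobenius_norm_mul_le_toEuclideanCLM_mul (M N : Matrix ι ι ℂ) :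
    ‖M * N‖ ≤ ‖toEuclideanCLM (𝕜 := ℂ) M‖ * ‖N‖ := by
  have norm_sq_eq_sum_col (L : Matrix ι ι ℂ) : ‖L‖ ^ 2 = ∑ j, ‖WithLp.toLp 2 (L.col j)‖ ^ 2 := by
    rw [frobenius_norm_def, ← Real.sqrt_eq_rpow, Real.sq_sqrt (by positivity), Finset.sum_comm]
    simp [EuclideanSpace.norm_sq_eq]
  refine (sq_le_sq₀ (norm_nonneg _) (by positivity)).1 ?_
  rw [mul_pow, norm_sq_eq_sum_col, norm_sq_eq_sum_col, Finset.mul_sum]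
  refine Finset.sum_le_sum fun j _ => ?_
  have hcol : WithLp.toLp 2 ((M * N).col j) =
      toEuclideanCLM (𝕜 := ℂ) M (WithLp.toLp 2 (N.col j)) := by
    rw [toEuclideanCLM_toLp]
    rfl
  rw [hcol, ← mul_pow]
  gcongr
  exact ContinuousLinearMap.le_opNorm _ _

lemma frobenius_norm_le_sqrt_card_mul_toEuclideanCLM (M : Matrix ι ι ℂ) :
    ‖M‖ ≤ √(Fintype.card ι) * ‖toEuclideanCLM (𝕜 := ℂ) M‖ := by
  have norm_one : ‖(1 : Matrix ι ι ℂ)‖ = √(Fintype.card ι) := by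
    rw [← Real.sqrt_sq (norm_nonneg _), frobenius_norm_sq]
    simp
  simpa [norm_one, mul_comm] using frobenius_norm_mul_le_toEuclideanCLM_mul M 1

lemma frobenius_norm_sub_smul_one_le {M : Matrix ι ι ℂ} {c : ℝ}
    (hc : Fintype.card ι * c = M.trace.re) : ‖M - c • 1‖ ≤ ‖M‖ := by
  have expand : ‖M - c • 1‖ ^ 2 = ‖M‖ ^ 2 - Fintype.card ι * c ^ 2 := by
    simp only [frobenius_norm_sq, conjTranspose_sub, conjTranspose_smul, conjTranspose_one,
      star_trivial, Matrix.sub_mul, Matrix.mul_sub, Matrix.smul_mul, Matrix.mul_smul,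
      Matrix.one_mul, Matrix.mul_one, trace_sub, trace_smul, trace_conjTranspose, trace_one,
      Complex.sub_re, Complex.smul_re, RCLike.star_def, Complex.conj_re, Complex.natCast_re,
      smul_eq_mul, ← hc]
    ring
  refine (sq_le_sq₀ (norm_nonneg _) (norm_nonneg _)).1 ?_
  rw [expand]
  exact sub_le_self _ (by positivity)

end FrobeniusNorm

lemma isHermitian_mul_self_sub_smul_one {ι : Type*} [Fintype ι] [DecidableEq ι]
    {M : Matrix ι ι ℂ} (hM : M.IsHermitian) (c : ℝ) : (M * M - c • 1).IsHermitian := by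
  refine IsHermitian.sub ?_ ?_
  · rw [Matrix.IsHermitian, conjTranspose_mul, hM.eq]
  · rw [Matrix.IsHermitian, conjTranspose_smul, conjTranspose_one, star_trivial]

section ConjKernelDefect

open scoped Matrix.Norms.Frobenius

variable {ι κ Ω : Type*} [Fintype ι] [DecidableEq ι] [Fintype κ] [DecidableEq κ]

/-- The constant `n - 1 / n`, which is the mean of the eigenvalues of `A²` when the Hermitian
`n × n` matrix `A` has the normalization `‖A‖² = n² - 1` of a standard Gaussian traceless one. -/
noncomputable def meanSqEigenvalue (ι : Type*) [Fintype ι] : ℝ :=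
  Fintype.card ι - 1 / Fintype.card ι

lemma kernelDefect_conjKernel [Nonempty ι] (e : κ ↪ ι) {A : Ω → Matrix ι ι ℂ} {ω : Ω}
    (hA : (A ω).IsHermitian) (g : EuclideanSpace ℝ (κ × κ)) :
    kernelDefect (conjKernel (blockCoords e) A) (ω, g) =
      hermitianCoords (((Fintype.card ι : ℝ) ^ 2)⁻¹ • ofHermitianCoords g -
        (2 * Fintype.card ι : ℝ)⁻¹ •
          ((A ω * A ω - meanSqEigenvalue ι • 1).submatrix e e * ofHermitianCoords g +
            ofHermitianCoords g * (A ω * A ω - meanSqEigenvalue ι • 1).submatrix e e) +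
        (Fintype.card ι : ℝ)⁻¹ •
          ((A ω).submatrix e e * ofHermitianCoords g * (A ω).submatrix e e)) := by
  have hcard : (Fintype.card ι : ℝ) ≠ 0 := by simp
  have kernel_sum : ∑ a, (inner ℝ (conjKernel (blockCoords e) A a ω) g : ℝ) •
      conjKernel (blockCoords e) A a ω = (2 * Fintype.card ι : ℝ)⁻¹ •
        ∑ a, (inner ℝ (blockCoords e (conjGenerator (hermitianBasis a) (A ω))) g : ℝ) •
          blockCoords e (conjGenerator (hermitianBasis a) (A ω)) := by
    simp only [conjKernel, real_inner_smul_left, smul_smul, mul_right_comm, ← mul_inv,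
      Finset.smul_sum]
    rw [Real.mul_self_sqrt (by positivity)]
  rw [kernelDefect, kernel_sum, sum_inner_smul_blockCoords_conjGenerator e hA]
  nth_rw 1 [← hermitianCoords_ofHermitianCoords g]
  rw [← map_smul hermitianCoords, ← map_sub]
  congr 1
  have hsub : (A ω * A ω - meanSqEigenvalue ι • 1).submatrix e e =
      (A ω * A ω).submatrix e e - meanSqEigenvalue ι • 1 := by
    rw [← submatrix_one_embedding e]
    rfl
  rw [hsub]
  simp only [Matrix.sub_mul, Matrix.mul_sub, Matrix.smul_mul, Matrix.mul_smul, Matrix.one_mul,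
    Matrix.mul_one, meanSqEigenvalue]
  match_scalars <;> field_simp
  ring

lemma norm_kernelDefect_conjKernel_le [Nonempty ι] (e : κ ↪ ι) {A : Ω → Matrix ι ι ℂ} {ω : Ω}
    (hA : (A ω).IsHermitian) (g : EuclideanSpace ℝ (κ × κ)) :
    ‖kernelDefect (conjKernel (blockCoords e) A) (ω, g)‖ ≤
      (((Fintype.card ι : ℝ) ^ 2)⁻¹ +
        (Fintype.card ι : ℝ)⁻¹ * ‖(A ω * A ω - meanSqEigenvalue ι • 1).submatrix e e‖ +
        (Fintype.card ι : ℝ)⁻¹ * ‖(A ω).submatrix e e‖ ^ 2) * ‖g‖ := by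
  rw [kernelDefect_conjKernel e hA]
  set G := ofHermitianCoords g
  set D := (A ω * A ω - meanSqEigenvalue ι • 1).submatrix e e
  set B := (A ω).submatrix e e
  have hG : G.IsHermitian := isHermitian_ofHermitianCoords g
  have hB : B.IsHermitian := hA.submatrix e
  have hD : D.IsHermitian := (isHermitian_mul_self_sub_smul_one hA _).submatrix e
  have herm : (((Fintype.card ι : ℝ) ^ 2)⁻¹ • G - (2 * Fintype.card ι : ℝ)⁻¹ • (D * G + G * D) +
      (Fintype.card ι : ℝ)⁻¹ • (B * G * B)).IsHermitian := by
    simp only [Matrix.IsHermitian, conjTranspose_add, conjTranspose_sub, conjTranspose_smul,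
      conjTranspose_mul, hG.eq, hB.eq, hD.eq, star_trivial, Matrix.mul_assoc, add_comm (G * D)]
  have hDG : ‖D * G + G * D‖ ≤ ‖D‖ * ‖G‖ + ‖G‖ * ‖D‖ :=
    (norm_add_le _ _).trans (add_le_add (frobenius_norm_mul _ _) (frobenius_norm_mul _ _))
  have hBGB : ‖B * G * B‖ ≤ ‖B‖ * ‖G‖ * ‖B‖ :=
    (frobenius_norm_mul _ _).trans (by gcongr; exact frobenius_norm_mul _ _)
  have norm_inv_smul (r : ℝ) (hr : 0 ≤ r) (M : Matrix κ κ ℂ) : ‖r⁻¹ • M‖ = r⁻¹ * ‖M‖ := by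
    rw [norm_smul, Real.norm_of_nonneg (inv_nonneg.2 hr)]
  rw [norm_hermitianCoords herm, ← norm_ofHermitianCoords g]
  refine (norm_add_le_of_le (norm_sub_le _ _) le_rfl).trans ?_
  rw [norm_inv_smul _ (by positivity), norm_inv_smul _ (by positivity),
    norm_inv_smul _ (by positivity)]
  calc ((Fintype.card ι : ℝ) ^ 2)⁻¹ * ‖G‖ + (2 * Fintype.card ι : ℝ)⁻¹ * ‖D * G + G * D‖ +
        (Fintype.card ι : ℝ)⁻¹ * ‖B * G * B‖
      ≤ ((Fintype.card ι : ℝ) ^ 2)⁻¹ * ‖G‖ +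
        (2 * Fintype.card ι : ℝ)⁻¹ * (‖D‖ * ‖G‖ + ‖G‖ * ‖D‖) +
        (Fintype.card ι : ℝ)⁻¹ * (‖B‖ * ‖G‖ * ‖B‖) := by gcongr
    _ = _ := by
        rw [mul_inv]
        ring

end ConjKernelDefect

section NormalizedBlock

open scoped Matrix.Norms.Frobenius

variable {ι κ Ω : Type*} [Fintype ι]

lemma norm_le_card_of_norm_sq_eq {M : Matrix ι ι ℂ} (hM_norm : ‖M‖ ^ 2 = Fintype.card ι ^ 2 - 1) :
    ‖M‖ ≤ Fintype.card ι :=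
  (sq_le_sq₀ (norm_nonneg _) (Nat.cast_nonneg _)).1 (by rw [hM_norm]; linarith)

variable [DecidableEq ι]

lemma card_mul_meanSqEigenvalue [Nonempty ι] {M : Matrix ι ι ℂ} (hM : M.IsHermitian)
    (hM_norm : ‖M‖ ^ 2 = Fintype.card ι ^ 2 - 1) :
    Fintype.card ι * meanSqEigenvalue ι = (M * M).trace.re := by
  have hcard : (Fintype.card ι : ℝ) ≠ 0 := by simp
  have htrace : (M * M).trace.re = ‖M‖ ^ 2 := by rw [frobenius_norm_sq, hM.eq]
  rw [htrace, hM_norm, meanSqEigenvalue]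
  field_simp

lemma trace_mul_self_sub_meanSqEigenvalue [Nonempty ι] {M : Matrix ι ι ℂ} (hM : M.IsHermitian)
    (hM_norm : ‖M‖ ^ 2 = Fintype.card ι ^ 2 - 1) :
    (M * M - meanSqEigenvalue ι • 1).trace = 0 := by
  have him : (M * M).trace.im = 0 := by
    rw [← Complex.conj_eq_iff_im, ← RCLike.star_def, ← trace_conjTranspose, conjTranspose_mul,
      hM.eq]
  have hre := card_mul_meanSqEigenvalue hM hM_norm
  refine Complex.ext ?_ ?_
  · simp [← hre, mul_comm]
  · simp [him]

lemma norm_mul_self_sub_meanSqEigenvalue_le [Nonempty ι] {M : Matrix ι ι ℂ} {ρ : ℝ}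
    (hM : M.IsHermitian) (hM_norm : ‖M‖ ^ 2 = Fintype.card ι ^ 2 - 1)
    (hM_op : ‖toEuclideanCLM (𝕜 := ℂ) M‖ ≤ ρ) :
    ‖M * M - meanSqEigenvalue ι • 1‖ ≤ Fintype.card ι * ρ := by
  calc ‖M * M - meanSqEigenvalue ι • 1‖
      ≤ ‖M * M‖ := frobenius_norm_sub_smul_one_le (card_mul_meanSqEigenvalue hM hM_norm)
    _ ≤ ‖toEuclideanCLM (𝕜 := ℂ) M‖ * ‖M‖ := frobenius_norm_mul_le_toEuclideanCLM_mul M M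
    _ ≤ ρ * Fintype.card ι :=
        mul_le_mul hM_op (norm_le_card_of_norm_sq_eq hM_norm) (norm_nonneg _)
          ((norm_nonneg _).trans hM_op)
    _ = Fintype.card ι * ρ := mul_comm _ _

namespace IsUnitarilyInvariant

variable [Fintype κ] [DecidableEq κ] [MeasurableSpace Ω] {P : Measure Ω} [IsProbabilityMeasure P]
  {A : Ω → Matrix ι ι ℂ}

lemma integral_norm_sq_submatrix_le [Nonempty ι] (hA : IsUnitarilyInvariant A P)
    (hA_herm : ∀ ω, (A ω).IsHermitian) (hA_trace : ∀ ω, (A ω).trace = 0) {σ : ℝ}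
    (hA_norm : ∀ ω, ‖A ω‖ ≤ Fintype.card ι * σ) (e : κ ↪ ι) :
    ∫ ω, ‖(A ω).submatrix e e‖ ^ 2 ∂P ≤ (Fintype.card κ * σ) ^ 2 := by
  have hcard : (0 : ℝ) < Fintype.card ι ^ 2 := by
    have := Fintype.card_pos (α := ι)
    positivity
  have hA_sq : ∫ ω, ‖A ω‖ ^ 2 ∂P ≤ (Fintype.card ι * σ) ^ 2 := by
    refine (integral_mono (hA.integrable_comp (G := fun M => ‖M‖ ^ 2) (by fun_prop))
      (integrable_const _) fun ω => pow_le_pow_left₀ (norm_nonneg _) (hA_norm ω) 2).trans_eq ?_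
    simp
  refine le_of_mul_le_mul_left ?_ hcard
  calc Fintype.card ι ^ 2 * ∫ ω, ‖(A ω).submatrix e e‖ ^ 2 ∂P
      ≤ Fintype.card κ ^ 2 * ∫ ω, ‖A ω‖ ^ 2 ∂P :=
        hA.card_sq_mul_integral_norm_sq_submatrix_le hA_herm hA_trace e
    _ ≤ Fintype.card κ ^ 2 * (Fintype.card ι * σ) ^ 2 := by gcongr
    _ = Fintype.card ι ^ 2 * (Fintype.card κ * σ) ^ 2 := by ring

lemma integral_norm_submatrix_le [Nonempty ι] (hA : IsUnitarilyInvariant A P)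
    (hA_herm : ∀ ω, (A ω).IsHermitian) (hA_trace : ∀ ω, (A ω).trace = 0) {σ : ℝ} (hσ : 0 ≤ σ)
    (hA_norm : ∀ ω, ‖A ω‖ ≤ Fintype.card ι * σ) (e : κ ↪ ι) :
    ∫ ω, ‖(A ω).submatrix e e‖ ∂P ≤ Fintype.card κ * σ :=
  (integral_norm_le_sqrt
    (hA.memLp_comp (G := fun M => M.submatrix e e) (by fun_prop) 2)).trans <|
    Real.sqrt_le_iff.2 ⟨by positivity, hA.integral_norm_sq_submatrix_le hA_herm hA_trace hA_norm e⟩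

lemma integral_norm_kernelDefect_conjKernel_le [Nonempty ι] (hA : IsUnitarilyInvariant A P)
    (hA_herm : ∀ ω, (A ω).IsHermitian) (hA_trace : ∀ ω, (A ω).trace = 0) {ρ : ℝ}
    (hA_norm : ∀ ω, ‖A ω‖ ^ 2 = Fintype.card ι ^ 2 - 1)
    (hA_op : ∀ ω, ‖toEuclideanCLM (𝕜 := ℂ) (A ω)‖ ≤ ρ) (hρ : 0 ≤ ρ) (e : κ ↪ ι) :
    ∫ p, ‖kernelDefect (conjKernel (blockCoords e) A) p‖
        ∂(P.prod (stdGaussian (EuclideanSpace ℝ (κ × κ)))) ≤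
      (((Fintype.card ι : ℝ) ^ 2)⁻¹ + (Fintype.card ι : ℝ)⁻¹ * (Fintype.card κ * ρ) +
        (Fintype.card ι : ℝ)⁻¹ * Fintype.card κ ^ 2) * Fintype.card κ := by
  let D (ω : Ω) := (A ω * A ω - meanSqEigenvalue ι • 1).submatrix e e
  let B (ω : Ω) := (A ω).submatrix e e
  let bound (ω : Ω) : ℝ := ((Fintype.card ι : ℝ) ^ 2)⁻¹ + (Fintype.card ι : ℝ)⁻¹ * ‖D ω‖ +
    (Fintype.card ι : ℝ)⁻¹ * ‖B ω‖ ^ 2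
  have hD_int : Integrable (fun ω => ‖D ω‖) P := hA.integrable_comp
    (G := fun M => ‖(M * M - meanSqEigenvalue ι • 1).submatrix e e‖) (by fun_prop)
  have hB_int : Integrable (fun ω => ‖B ω‖ ^ 2) P :=
    hA.integrable_comp (G := fun M => ‖M.submatrix e e‖ ^ 2) (by fun_prop)
  have hbound_int : Integrable bound P :=
    ((integrable_const _).add (hD_int.const_mul _)).add (hB_int.const_mul _)
  have hD : ∫ ω, ‖D ω‖ ∂P ≤ Fintype.card κ * ρ :=
    (hA.mul_self.sub_smul_one _).integral_norm_submatrix_le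
      (fun ω => isHermitian_mul_self_sub_smul_one (hA_herm ω) _)
      (fun ω => trace_mul_self_sub_meanSqEigenvalue (hA_herm ω) (hA_norm ω)) hρ
      (fun ω => norm_mul_self_sub_meanSqEigenvalue_le (hA_herm ω) (hA_norm ω) (hA_op ω)) e
  have hB : ∫ ω, ‖B ω‖ ^ 2 ∂P ≤ Fintype.card κ ^ 2 := by
    simpa using hA.integral_norm_sq_submatrix_le (σ := 1) hA_herm hA_trace
      (fun ω => by simpa using norm_le_card_of_norm_sq_eq (hA_norm ω)) e
  have hbound : ∫ ω, bound ω ∂P ≤ ((Fintype.card ι : ℝ) ^ 2)⁻¹ +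
      (Fintype.card ι : ℝ)⁻¹ * (Fintype.card κ * ρ) +
      (Fintype.card ι : ℝ)⁻¹ * Fintype.card κ ^ 2 := by
    rw [integral_add (f := fun ω => ((Fintype.card ι : ℝ) ^ 2)⁻¹ + (Fintype.card ι : ℝ)⁻¹ * ‖D ω‖)
        ((integrable_const _).add (hD_int.const_mul _)) (hB_int.const_mul _),
      integral_add (integrable_const _) (hD_int.const_mul _), integral_const_mul,
      integral_const_mul, integral_const, probReal_univ, one_smul]
    gcongr
  have hgauss : ∫ g, ‖g‖ ∂stdGaussian (EuclideanSpace ℝ (κ × κ)) ≤ Fintype.card κ := by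
    simpa using integral_norm_stdGaussian_le (E := EuclideanSpace ℝ (κ × κ))
  calc ∫ p, ‖kernelDefect (conjKernel (blockCoords e) A) p‖
        ∂(P.prod (stdGaussian (EuclideanSpace ℝ (κ × κ))))
      ≤ ∫ p, bound p.1 * ‖p.2‖ ∂(P.prod (stdGaussian (EuclideanSpace ℝ (κ × κ)))) :=
        integral_mono_of_nonneg (.of_forall fun p => norm_nonneg _)
          (hbound_int.mul_prod integrable_id_stdGaussian.norm)
          (.of_forall fun p => norm_kernelDefect_conjKernel_le e (hA_herm p.1) p.2)
    _ = (∫ ω, bound ω ∂P) * ∫ g, ‖g‖ ∂stdGaussian (EuclideanSpace ℝ (κ × κ)) :=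
        integral_prod_mul bound _
    _ ≤ _ := by gcongr

end IsUnitarilyInvariant

end NormalizedBlock

section WassersteinBound

lemma le_three_mul_sq_mul_sqrt_mul_sq {k n : ℕ} {x r : ℝ} (hr : 1 ≤ √n * r) (hx : x ≤ 2 * k)
    (hx' : x ≤ (((n : ℝ) ^ 2)⁻¹ + r * k + (n : ℝ)⁻¹ * k ^ 2) * k) :
    x ≤ 3 * k ^ 2 * √n * r ^ 2 := by
  rcases k.eq_zero_or_pos with rfl | hk
  · simpa using hx
  have hk_one : (1 : ℝ) ≤ k := by exact_mod_cast hk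
  have hn_pos : 0 < n := by
    refine Nat.pos_of_ne_zero fun hn => ?_
    norm_num [hn] at hr
  have hs_one : 1 ≤ √n := Real.one_le_sqrt.2 (by exact_mod_cast hn_pos)
  have hs_sq : (n : ℝ) = √n ^ 2 := (Real.sq_sqrt (Nat.cast_nonneg n)).symm
  generalize √(n : ℝ) = s at *
  have hs_pos : 0 < s := one_pos.trans_le hs_one
  have hr_pos : 0 < r := pos_of_mul_pos_right (one_pos.trans_le hr) hs_pos.le
  set q := s * r ^ 2
  have hrq : r ≤ q := by nlinarith
  have hsq : s⁻¹ ≤ q := ((inv_le_iff_one_le_mul₀' hs_pos).2 hr).trans hrq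
  suffices x ≤ 3 * (k ^ 2 * q) by linarith
  rcases le_or_gt (k : ℝ) s with hks | hks
  · have first : ((n : ℝ) ^ 2)⁻¹ ≤ k * s⁻¹ := by
      calc ((n : ℝ) ^ 2)⁻¹ = (s ^ 4)⁻¹ := by rw [hs_sq, ← pow_mul]
        _ ≤ s⁻¹ := inv_anti₀ hs_pos (le_self_pow₀ hs_one four_ne_zero)
        _ ≤ k * s⁻¹ := le_mul_of_one_le_left (inv_nonneg.2 hs_pos.le) hk_one
    have third : (n : ℝ)⁻¹ * k ^ 2 ≤ k * s⁻¹ := by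
      calc (n : ℝ)⁻¹ * k ^ 2 = k * s⁻¹ * (k * s⁻¹) := by rw [hs_sq]; ring
        _ ≤ k * s⁻¹ := mul_le_of_le_one_right (by positivity)
          ((div_eq_mul_inv (k : ℝ) s).symm.trans_le ((div_le_one hs_pos).2 hks))
    calc x ≤ (k * s⁻¹ + r * k + k * s⁻¹) * k := hx'.trans (by gcongr)
      _ ≤ (k * q + q * k + k * q) * k := by gcongr
      _ = 3 * (k ^ 2 * q) := by ring
  · have hkq : 1 ≤ k * q := by
      calc 1 = s * s⁻¹ := (mul_inv_cancel₀ hs_pos.ne').symm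
        _ ≤ k * q := by gcongr
    nlinarith

open scoped Matrix.Norms.Frobenius

variable {ι κ Ω : Type*} [Fintype ι] [DecidableEq ι] [Fintype κ] [DecidableEq κ]
  [MeasurableSpace Ω] {P : Measure Ω} [IsProbabilityMeasure P] {A : Ω → Matrix ι ι ℂ}

lemma IsUnitarilyInvariant.abs_integral_blockCoords_sub_integral_stdGaussian_le [Nonempty ι]
    (hA : IsUnitarilyInvariant A P) (hA_herm : ∀ ω, (A ω).IsHermitian)
    (hA_trace : ∀ ω, (A ω).trace = 0) {r : ℝ}
    (hA_norm : ∀ ω, ‖A ω‖ ^ 2 = Fintype.card ι ^ 2 - 1)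
    (hA_op : ∀ ω, ‖toEuclideanCLM (𝕜 := ℂ) (A ω)‖ ≤ Fintype.card ι * r)
    (hr : 1 ≤ √(Fintype.card ι) * r) (e : κ ↪ ι) {f : EuclideanSpace ℝ (κ × κ) → ℝ}
    (hf : LipschitzWith 1 f) :
    |∫ ω, f (blockCoords e (A ω)) ∂P - ∫ x, f x ∂stdGaussian (EuclideanSpace ℝ (κ × κ))| ≤
      3 * Fintype.card κ ^ 2 * √(Fintype.card ι) * r ^ 2 := by
  have hr_nonneg : 0 ≤ r :=
    (pos_of_mul_pos_right (one_pos.trans_le hr) (Real.sqrt_nonneg _)).le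
  have hcard : (Fintype.card ι : ℝ) ≠ 0 := by simp
  refine le_three_mul_sq_mul_sqrt_mul_sq hr ?_ ?_
  · have hblock : ∫ ω, ‖blockCoords e (A ω)‖ ∂P ≤ Fintype.card κ := by
      simpa [norm_blockCoords e (hA_herm _)] using hA.integral_norm_submatrix_le hA_herm hA_trace
        zero_le_one (fun ω => by simpa using norm_le_card_of_norm_sq_eq (hA_norm ω)) e
    have hgauss : ∫ g, ‖g‖ ∂stdGaussian (EuclideanSpace ℝ (κ × κ)) ≤ Fintype.card κ := by
      simpa using integral_norm_stdGaussian_le (E := EuclideanSpace ℝ (κ × κ))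
    calc |∫ ω, f (blockCoords e (A ω)) ∂P - ∫ x, f x ∂stdGaussian (EuclideanSpace ℝ (κ × κ))|
        ≤ (1 : NNReal) * (∫ ω, ‖blockCoords e (A ω)‖ ∂P +
            ∫ x, ‖x‖ ∂stdGaussian (EuclideanSpace ℝ (κ × κ))) :=
          abs_integral_comp_sub_integral_comp_le hf
            (hA.integrable_comp (blockCoords e).continuous) integrable_id_stdGaussian
      _ ≤ 2 * Fintype.card κ := by
          rw [NNReal.coe_one, one_mul, two_mul]
          exact add_le_add hblock hgauss
  · have hdefect := hA.integral_norm_kernelDefect_conjKernel_le hA_herm hA_trace hA_norm hA_op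
      (by positivity) e
    have hcancel : (Fintype.card ι : ℝ)⁻¹ * (Fintype.card κ * (Fintype.card ι * r)) =
        r * Fintype.card κ := by field_simp
    rw [hcancel] at hdefect
    refine ((hA.hasSteinKernel_conjKernel hA_trace
      (blockCoords e)).abs_integral_sub_integral_stdGaussian_le hf).trans ?_
    rwa [NNReal.coe_one, one_mul]

lemma IsUnitarilyInvariant.abs_integral_smul_blockCoords_sub_integral_stdGaussian_le
    (hA : IsUnitarilyInvariant A P) (hA_herm : ∀ ω, (A ω).IsHermitian)
    (hA_trace : ∀ ω, (A ω).trace = 0) {s r : ℝ} (hs : 0 < s) (hA_norm : ∀ ω, ‖A ω‖ = s)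
    (hA_op : ∀ ω, ‖toEuclideanCLM (𝕜 := ℂ) (A ω)‖ ≤ r) (e : κ ↪ ι)
    {f : EuclideanSpace ℝ (κ × κ) → ℝ} (hf : LipschitzWith 1 f) :
    |∫ ω, f (blockCoords e ((√((Fintype.card ι : ℝ) ^ 2 - 1) / s) • A ω)) ∂P -
        ∫ x, f x ∂stdGaussian (EuclideanSpace ℝ (κ × κ))| ≤
      3 * Fintype.card κ ^ 2 * √(Fintype.card ι) * (r ^ 2 / s ^ 2) := by
  obtain ⟨ω₀⟩ := P.nonempty_of_neZero
  have hs_le : s ≤ √(Fintype.card ι) * r := by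
    rw [← hA_norm ω₀]
    exact (frobenius_norm_le_sqrt_card_mul_toEuclideanCLM _).trans (by gcongr; exact hA_op ω₀)
  have hcard : Fintype.card ι ≠ 0 := fun hcard => by
    norm_num [hcard] at hs_le
    exact hs.not_ge hs_le
  have : Nonempty ι := Fintype.card_pos_iff.1 (Nat.pos_of_ne_zero hcard)
  have hcard_sq : (0 : ℝ) ≤ (Fintype.card ι : ℝ) ^ 2 - 1 :=
    sub_nonneg.2 (one_le_pow₀ (by exact_mod_cast Nat.one_le_iff_ne_zero.2 hcard))
  have hsqrt_le : √((Fintype.card ι : ℝ) ^ 2 - 1) ≤ Fintype.card ι :=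
    Real.sqrt_le_iff.2 ⟨Nat.cast_nonneg _, sub_le_self _ zero_le_one⟩
  set c := √((Fintype.card ι : ℝ) ^ 2 - 1) / s
  have hc : 0 ≤ c := by positivity
  have hnorm (ω : Ω) : ‖c • A ω‖ ^ 2 = Fintype.card ι ^ 2 - 1 := by
    rw [norm_smul, Real.norm_of_nonneg hc, hA_norm, div_mul_cancel₀ _ hs.ne', Real.sq_sqrt hcard_sq]
  have hop (ω : Ω) : ‖toEuclideanCLM (𝕜 := ℂ) (c • A ω)‖ ≤ Fintype.card ι * (r / s) := by
    calc ‖toEuclideanCLM (𝕜 := ℂ) (c • A ω)‖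
        = c * ‖toEuclideanCLM (𝕜 := ℂ) (A ω)‖ := by
          rw [← Complex.coe_smul, map_smul, norm_smul, Complex.norm_of_nonneg hc]
      _ ≤ Fintype.card ι / s * r :=
          mul_le_mul (div_le_div_of_nonneg_right hsqrt_le hs.le) (hA_op ω) (norm_nonneg _)
            (div_nonneg (Nat.cast_nonneg _) hs.le)
      _ = Fintype.card ι * (r / s) := by ring
  rw [← div_pow]
  refine (hA.smul c).abs_integral_blockCoords_sub_integral_stdGaussian_le (fun ω => ?_)
    (fun ω => by rw [trace_smul, hA_trace, smul_zero]) hnorm hop ?_ e hf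
  · rw [Matrix.IsHermitian, conjTranspose_smul, (hA_herm ω).eq, star_trivial]
  · rwa [← mul_div_assoc, one_le_div hs]

end WassersteinBound

section GUE

open scoped Matrix.Norms.Frobenius

variable {k : ℕ} {γ : Measure (Matrix (Fin k) (Fin k) ℂ)}

namespace IsGUE

lemma ae_isHermitian (hγ : IsGUE γ) : ∀ᵐ M ∂γ, M.IsHermitian := by
  have := hγ.1
  have hclosed : IsClosed {M : Matrix (Fin k) (Fin k) ℂ | M.IsHermitian} :=
    isClosed_eq continuous_id.matrix_conjTranspose continuous_id
  exact (prob_compl_eq_zero_iff hclosed.measurableSet).2 hγ.2.1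

lemma map_inner_hermitianCoords (hγ : IsGUE γ) {u : EuclideanSpace ℝ (Fin k × Fin k)}
    (hu : ‖u‖ = 1) :
    γ.map (fun M => (inner ℝ (hermitianCoords M) u : ℝ)) = gaussianReal 0 1 := by
  have hherm := isHermitian_ofHermitianCoords u
  have hnorm : (ofHermitianCoords u * ofHermitianCoords u).trace.re = 1 := by
    nth_rw 2 [← hherm.eq]
    rw [← frobenius_norm_sq, norm_ofHermitianCoords, hu, one_pow]
  simpa only [inner_hermitianCoords] using hγ.2.2 _ hherm hnorm

lemma map_hermitianCoords (hγ : IsGUE γ) :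
    γ.map hermitianCoords = stdGaussian (EuclideanSpace ℝ (Fin k × Fin k)) := by
  have := hγ.1
  have hcoords : Measurable (hermitianCoords (κ := Fin k)) := hermitianCoords.continuous.measurable
  have := Measure.isProbabilityMeasure_map (μ := γ) hcoords.aemeasurable
  refine Measure.ext_of_charFun (funext fun t => ?_)
  rw [charFun_stdGaussian]
  rcases eq_or_ne t 0 with rfl | ht
  · simp
  have ht_norm : ‖t‖ ≠ 0 := norm_ne_zero_iff.2 ht
  have hmap := hγ.map_inner_hermitianCoords (u := ‖t‖⁻¹ • t) (by simp [norm_smul, ht_norm])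
  have hinner : Measurable fun M : Matrix (Fin k) (Fin k) ℂ =>
      (inner ℝ (hermitianCoords M) (‖t‖⁻¹ • t) : ℝ) := Continuous.measurable (by fun_prop)
  calc charFun (γ.map hermitianCoords) t
      = charFun (γ.map fun M => (inner ℝ (hermitianCoords M) (‖t‖⁻¹ • t) : ℝ)) ‖t‖ := by
        rw [charFun_apply, charFun_apply, integral_map hcoords.aemeasurable (by fun_prop),
          integral_map hinner.aemeasurable (by fun_prop)]
        simp [inner_smul_right, ht_norm]
    _ = Complex.exp (-‖t‖ ^ 2 / 2) := by
        rw [hmap, charFun_gaussianReal]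
        simp [neg_div]

lemma integral_eq_integral_stdGaussian (hγ : IsGUE γ) {f : Matrix (Fin k) (Fin k) ℂ → ℝ}
    (hf : Continuous f) :
    ∫ M, f M ∂γ =
      ∫ x, f (ofHermitianCoords x) ∂stdGaussian (EuclideanSpace ℝ (Fin k × Fin k)) := by
  rw [← hγ.map_hermitianCoords, integral_map (f := fun x => f (ofHermitianCoords x))
    hermitianCoords.continuous.measurable.aemeasurable
    (hf.comp ofHermitianCoords.continuous).aestronglyMeasurable]
  refine integral_congr_ae ?_
  filter_upwards [hγ.ae_isHermitian] with M hM
  rw [ofHermitianCoords_hermitianCoords hM]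

end IsGUE

end GUE

section NormComparison

variable {n : ℕ}

section

open scoped Matrix.Norms.L2Operator

lemma norm_toEuclideanCLM_unitary_conj {ι : Type*} [Fintype ι] [DecidableEq ι]
    {V : Matrix ι ι ℂ} (hV : V ∈ unitaryGroup ι ℂ) (M : Matrix ι ι ℂ) :
    ‖toEuclideanCLM (𝕜 := ℂ) (V * M * Vᴴ)‖ = ‖toEuclideanCLM (𝕜 := ℂ) M‖ := by
  rw [← cstar_norm_def, ← cstar_norm_def, ← star_eq_conjTranspose,
    CStarRing.norm_mul_mem_unitary _ (Unitary.star_mem hV), CStarRing.norm_mem_unitary_mul _ hV]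

lemma norm_toEuclideanCLM_map_ofReal_of_isDiag {Λ : Matrix (Fin n) (Fin n) ℝ} (hΛ : Λ.IsDiag) :
    ‖toEuclideanCLM (𝕜 := ℂ) (Λ.map (fun x => (x : ℂ)))‖ = opNormR Λ := by
  obtain ⟨d, rfl⟩ : ∃ d, Λ = diagonal d := ⟨_, hΛ.diagonal_diag.symm⟩
  have hmap : (diagonal d).map (fun x => (x : ℂ)) = diagonal fun i => (d i : ℂ) :=
    diagonal_map Complex.ofReal_zero
  rw [hmap, opNormR, ← cstar_norm_def, ← cstar_norm_def, l2_opNorm_diagonal, l2_opNorm_diagonal]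
  simp [Pi.norm_def]

end

open scoped Matrix.Norms.Frobenius

lemma frobenius_norm_map_ofReal (Λ : Matrix (Fin n) (Fin n) ℝ) :
    ‖Λ.map (fun x => (x : ℂ))‖ = hsNormR Λ := by
  rw [hsNormR, ← Real.sqrt_sq (norm_nonneg _), frobenius_norm_sq]
  congr 1
  simp [Matrix.trace, Matrix.mul_apply]

lemma hsNormR_pos {Λ : Matrix (Fin n) (Fin n) ℝ} (hΛ : Λ ≠ 0) : 0 < hsNormR Λ := by
  rw [← frobenius_norm_map_ofReal, norm_pos_iff]
  simpa using (map_injective Complex.ofReal_injective).ne hΛ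

lemma lipschitzWith_one_of_abs_sub_le_hsNormC {f : Matrix (Fin n) (Fin n) ℂ → ℝ}
    (hf : ∀ M₁ M₂, |f M₁ - f M₂| ≤ hsNormC (M₁ - M₂)) : LipschitzWith 1 f :=
  .mk_one fun M N => by
    rw [Real.dist_eq, dist_eq_norm, ← hsNormC_eq_norm]
    exact hf M N

end NormComparison

section GeneralBound

open scoped Matrix.Norms.Frobenius

theorem stmt8_general {ι Ω : Type*} [Fintype ι] [DecidableEq ι] [MeasurableSpace Ω]
    {P : Measure Ω} [IsProbabilityMeasure P] {A : Ω → Matrix ι ι ℂ}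
    (hA : IsUnitarilyInvariant A P) (hA_herm : ∀ ω, (A ω).IsHermitian)
    (hA_trace : ∀ ω, (A ω).trace = 0) {s r : ℝ} (hs : 0 < s) (hA_norm : ∀ ω, ‖A ω‖ = s)
    (hA_op : ∀ ω, ‖toEuclideanCLM (𝕜 := ℂ) (A ω)‖ ≤ r) {k : ℕ} (e : Fin k ↪ ι)
    {γ : Measure (Matrix (Fin k) (Fin k) ℂ)} (hγ : IsGUE γ) {f : Matrix (Fin k) (Fin k) ℂ → ℝ}
    (hf : ∀ M₁ M₂, |f M₁ - f M₂| ≤ hsNormC (M₁ - M₂)) :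
    |∫ ω, f ((√((Fintype.card ι : ℝ) ^ 2 - 1) / s) • (A ω).submatrix e e) ∂P - ∫ M, f M ∂γ| ≤
      3 * k ^ 2 * √(Fintype.card ι) * (r ^ 2 / s ^ 2) := by
  have hf_lip := lipschitzWith_one_of_abs_sub_le_hsNormC hf
  have hf_coords : LipschitzWith 1 fun x : EuclideanSpace ℝ (Fin k × Fin k) =>
      f (ofHermitianCoords x) := by
    have hiso : Isometry (ofHermitianCoords (κ := Fin k)) :=
      AddMonoidHomClass.isometry_of_norm _ norm_ofHermitianCoords
    simpa [Function.comp_def] using hf_lip.comp hiso.lipschitz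
  have hblock (c : ℝ) (ω : Ω) :
      ofHermitianCoords (blockCoords e (c • A ω)) = c • (A ω).submatrix e e := by
    rw [map_smul, map_smul, blockCoords_apply,
      ofHermitianCoords_hermitianCoords ((hA_herm ω).submatrix e)]
  have hbound := hA.abs_integral_smul_blockCoords_sub_integral_stdGaussian_le hA_herm hA_trace hs
    hA_norm hA_op e hf_coords
  simpa only [hblock, hγ.integral_eq_integral_stdGaussian hf_lip.continuous, Fintype.card_fin]
    using hbound

end GeneralBound

theorem stmt8 {n k : ℕ} (hk : k ≤ n)
    (Λ : Matrix (Fin n) (Fin n) ℝ) (hdiag : Λ.IsDiag) (hΛne : Λ ≠ 0)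
    (hΛtr : Λ.trace = 0)
    {Ω : Type*} [MeasurableSpace Ω] (P : Measure Ω) [IsProbabilityMeasure P]
    -- U is Haar distributed on the unitary group:
    (U : Ω → Matrix (Fin n) (Fin n) ℂ) (hUmeas : Measurable U)
    (hUmem : ∀ ω, U ω ∈ Matrix.unitaryGroup (Fin n) ℂ)
    (hUhaar : ∀ V ∈ Matrix.unitaryGroup (Fin n) ℂ,
      Measure.map (fun ω => V * U ω) P = Measure.map U P)
    -- G is a k × k GUE matrix with distribution γ:
    (γ : Measure (Matrix (Fin k) (Fin k) ℂ)) (hγ : IsGUE γ)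
    -- W₁ bound, in dual (1-Lipschitz w.r.t. Hilbert–Schmidt norm) form:
    (f : Matrix (Fin k) (Fin k) ℂ → ℝ)
    (hf : ∀ M₁ M₂ : Matrix (Fin k) (Fin k) ℂ, |f M₁ - f M₂| ≤ hsNormC (M₁ - M₂)) :
    |(∫ ω, f ((Real.sqrt ((n : ℝ) ^ 2 - 1) / hsNormR Λ) •
          ((U ω * Λ.map (fun x => (x : ℂ)) * (U ω)ᴴ).submatrix
            (Fin.castLE hk) (Fin.castLE hk))) ∂P) -
        ∫ M, f M ∂γ| ≤
      18 * k ^ 2 * Real.sqrt n * ((opNormR Λ) ^ 2 / (hsNormR Λ) ^ 2) := by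
  have hΛ_herm : (Λ.map (fun x => (x : ℂ))).IsHermitian :=
    (isHermitian_iff_isSymm.2 hdiag.isSymm).map _ fun x => (Complex.conj_ofReal x).symm
  have hΛ_trace : (Λ.map (fun x => (x : ℂ))).trace = 0 := by
    simpa [Matrix.trace] using congrArg Complex.ofReal hΛtr
  have hbound := stmt8_general (isUnitarilyInvariant_conj hUmeas hUmem hUhaar _)
    (fun ω => isHermitian_mul_mul_conjTranspose (U ω) hΛ_herm)
    (fun ω => (trace_unitary_conj (hUmem ω) _).trans hΛ_trace) (hsNormR_pos hΛne)
    (fun ω => (frobenius_norm_unitary_conj (hUmem ω) _).trans (frobenius_norm_map_ofReal Λ))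
    (fun ω => ((norm_toEuclideanCLM_unitary_conj (hUmem ω) _).trans
      (norm_toEuclideanCLM_map_ofReal_of_isDiag hdiag)).le) (Fin.castLEEmb hk) hγ hf
  rw [Fintype.card_fin] at hbound
  refine hbound.trans ?_
  gcongr
  norm_num
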